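/- For every ε > 0 there exists Δ₀ such that the following holds: if G is a finite simple graph with maximum degree Δ(G) ≥ Δ₀ and minimum degree δ(G) ≥ (ln Δ(G))^25, and L is a list assignment of E(G) such that |L(e)| ≥ (1+ε)·max{deg(u), deg(v)} for every edge e = uv, then there is an L-edge-colouring of G. -/

import Mathlib

/-- An `L`-edge-colouring of a simple graph `G`: a function `γ` on edges such that
`γ e ∈ L e` for every edge `e` and distinct edges sharing a vertex get distinct colours. -/
def IsLEdgeColouring {V : Type} (G : SimpleGraph V) (L : Sym2 V → Finset ℕ)
    (γ : Sym2 V → ℕ) : Prop :=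
  (∀ e ∈ G.edgeSet, γ e ∈ L e) ∧
  ∀ e ∈ G.edgeSet, ∀ f ∈ G.edgeSet, e ≠ f → (∃ v, v ∈ e ∧ v ∈ f) → γ e ≠ γ f


/-! ### Finite product probability spaces -/

/-- A family of probability weights on `α`. -/
def IsW {ι α : Type} [Fintype α] (p : ι → α → ℝ) : Prop :=
  (∀ i y, 0 ≤ p i y) ∧ ∀ i, ∑ y, p i y = 1

/-- Expectation with respect to the product of the weights. -/
noncomputable def EE {ι α : Type} [Fintype ι] [DecidableEq ι] [Fintype α] (p : ι → α → ℝ)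
    (f : (ι → α) → ℝ) : ℝ := ∑ ω, (∏ i, p i (ω i)) * f ω

open Classical in
/-- Probability of an event. -/
noncomputable def PP {ι α : Type} [Fintype ι] [DecidableEq ι] [Fintype α] (p : ι → α → ℝ)
    (B : (ι → α) → Prop) : ℝ := EE p (fun ω => if B ω then 1 else 0)

section Prob

variable {ι α : Type} [Fintype ι] [DecidableEq ι] [Fintype α] {p : ι → α → ℝ}

lemma IsW.wnn (hp : IsW p) (ω : ι → α) : 0 ≤ ∏ i, p i (ω i) :=
  Finset.prod_nonneg fun i _ => hp.1 i _

lemma EE_prod (p : ι → α → ℝ) (g : ι → α → ℝ) :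
    EE p (fun ω => ∏ i, g i (ω i)) = ∏ i, ∑ y, p i y * g i y := by
  unfold EE
  rw [Finset.prod_univ_sum]
  rw [Fintype.piFinset_univ]
  apply Finset.sum_congr rfl
  intro ω _
  rw [Finset.prod_mul_distrib]

lemma EE_const (hp : IsW p) (a : ℝ) : EE p (fun _ => a) = a := by
  have h := EE_prod p (fun _ _ => 1)
  simp only [Finset.prod_const_one, mul_one, hp.2] at h
  unfold EE at *
  rw [← Finset.sum_mul]
  simp only [mul_one] at h
  rw [h, one_mul]

lemma EE_mono (hp : IsW p) {f g : (ι → α) → ℝ} (h : ∀ ω, f ω ≤ g ω) : EE p f ≤ EE p g :=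
  Finset.sum_le_sum fun ω _ => mul_le_mul_of_nonneg_left (h ω) (hp.wnn ω)

lemma EE_add (f g : (ι → α) → ℝ) : EE p (fun ω => f ω + g ω) = EE p f + EE p g := by
  simp [EE, mul_add, Finset.sum_add_distrib]

lemma EE_sub (f g : (ι → α) → ℝ) : EE p (fun ω => f ω - g ω) = EE p f - EE p g := by
  simp [EE, mul_sub, Finset.sum_sub_distrib]

lemma EE_mul (a : ℝ) (f : (ι → α) → ℝ) : EE p (fun ω => a * f ω) = a * EE p f := by
  simp only [EE, Finset.mul_sum]
  exact Finset.sum_congr rfl fun _ _ => by ring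

lemma EE_neg (f : (ι → α) → ℝ) : EE p (fun ω => - f ω) = - EE p f := by
  simp [EE]

lemma EE_sum {κ : Type} (s : Finset κ) (f : κ → (ι → α) → ℝ) :
    EE p (fun ω => ∑ k ∈ s, f k ω) = ∑ k ∈ s, EE p (f k) := by
  simp only [EE, Finset.mul_sum]
  exact Finset.sum_comm

lemma EE_decouple (hp : IsW p) (Φ : (ι → α) → (ι → α) → ℝ) (I : Finset ι)
    (h1 : ∀ a a' b, (∀ i, i ∉ I → a i = a' i) → Φ a b = Φ a' b)
    (h2 : ∀ a b b', (∀ i, i ∈ I → b i = b' i) → Φ a b = Φ a b') :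
    EE p (fun ω => Φ ω ω) = EE p (fun a => EE p (Φ a)) := by
  have e1 : EE p (fun ω => Φ ω ω) = ∑ x : (ι → α) × (ι → α),
      (∏ i, p i (x.1 i)) * (∏ i, p i (x.2 i)) * Φ x.1 x.1 := by
    rw [Fintype.sum_prod_type]
    unfold EE
    apply Finset.sum_congr rfl
    intro a _
    have := EE_const hp (1 : ℝ)
    unfold EE at this
    simp only [mul_one] at this
    simp only
    rw [← Finset.sum_mul, ← Finset.mul_sum, this, mul_one]
  have e2 : EE p (fun a => EE p (Φ a)) = ∑ x : (ι → α) × (ι → α),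
      (∏ i, p i (x.1 i)) * (∏ i, p i (x.2 i)) * Φ x.1 x.2 := by
    rw [Fintype.sum_prod_type]
    unfold EE
    apply Finset.sum_congr rfl
    intro a _
    rw [Finset.mul_sum]
    exact Finset.sum_congr rfl fun _ _ => by ring
  rw [e1, e2]
  let σ : (ι → α) × (ι → α) → (ι → α) × (ι → α) := fun x =>
    (fun i => if i ∈ I then x.2 i else x.1 i, fun i => if i ∈ I then x.1 i else x.2 i)
  have hσ : Function.Involutive σ := by
    intro x
    ext i
    · by_cases h : i ∈ I <;> simp [σ, h]
    · by_cases h : i ∈ I <;> simp [σ, h]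
  symm
  apply Fintype.sum_equiv hσ.toPerm
  intro x
  have hw : (∏ i, p i (x.1 i)) * (∏ i, p i (x.2 i))
      = (∏ i, p i ((σ x).1 i)) * (∏ i, p i ((σ x).2 i)) := by
    rw [← Finset.prod_mul_distrib, ← Finset.prod_mul_distrib]
    apply Finset.prod_congr rfl
    intro i _
    by_cases h : i ∈ I
    · simp [σ, h, mul_comm]
    · simp [σ, h]
  simp only [Function.Involutive.coe_toPerm]
  rw [hw]
  congr 1
  rw [h1 x.1 (σ x).1 x.2 (fun i hi => by simp [σ, hi])]
  rw [h2 _ x.2 (σ x).1 (fun i hi => by simp [σ, hi])]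

lemma PP_nonneg (hp : IsW p) (B : (ι → α) → Prop) : 0 ≤ PP p B := by
  unfold PP EE
  apply Finset.sum_nonneg
  intro ω _
  apply mul_nonneg (hp.wnn ω)
  simp only
  split_ifs <;> norm_num

lemma PP_mono (hp : IsW p) {A B : (ι → α) → Prop} (h : ∀ ω, A ω → B ω) : PP p A ≤ PP p B := by
  apply EE_mono hp
  intro ω
  by_cases hA : A ω
  · simp [hA, h ω hA]
  · simp only [hA, if_false]
    split_ifs <;> norm_num

lemma PP_or (hp : IsW p) (A B : (ι → α) → Prop) :
    PP p (fun ω => A ω ∨ B ω) ≤ PP p A + PP p B := by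
  unfold PP
  rw [← EE_add]
  apply EE_mono hp
  intro ω
  by_cases hA : A ω <;> by_cases hB : B ω <;> simp [hA, hB]

lemma PP_exists {κ : Type} (hp : IsW p) (s : Finset κ) (A : κ → (ι → α) → Prop) :
    PP p (fun ω => ∃ k ∈ s, A k ω) ≤ ∑ k ∈ s, PP p (A k) := by
  classical
  unfold PP
  rw [← EE_sum]
  apply EE_mono hp
  intro ω
  have hnn : ∀ k ∈ s, (0 : ℝ) ≤ if A k ω then (1 : ℝ) else 0 := by
    intro k _; split_ifs <;> norm_num
  split_ifs with h
  · obtain ⟨k, hk, hA⟩ := h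
    calc (1 : ℝ) = if A k ω then (1 : ℝ) else 0 := by simp [hA]
      _ ≤ _ := by
        convert Finset.single_le_sum (f := fun k => if A k ω then (1 : ℝ) else 0) hnn hk
  · convert Finset.sum_nonneg hnn

lemma PP_exists_le {κ : Type} (hp : IsW p) (s : Finset κ) (A : κ → (ι → α) → Prop) (b : ℝ)
    (h : ∀ k ∈ s, PP p (A k) ≤ b) :
    PP p (fun ω => ∃ k ∈ s, A k ω) ≤ s.card * b := by
  refine (PP_exists hp s A).trans ?_
  refine (Finset.sum_le_sum h).trans ?_
  simp

/-- Independence. -/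
lemma PP_indep (hp : IsW p) (A B : (ι → α) → Prop) (I : Finset ι)
    (h1 : ∀ a a', (∀ i, i ∉ I → a i = a' i) → (A a ↔ A a'))
    (h2 : ∀ a a', (∀ i, i ∈ I → a i = a' i) → (B a ↔ B a')) :
    PP p (fun ω => A ω ∧ B ω) = PP p A * PP p B := by
  classical
  have := EE_decouple hp (fun a b => (if A a then (1:ℝ) else 0) * (if B b then 1 else 0)) I
    (fun a a' b h => by simp [h1 a a' h]) (fun a b b' h => by simp [h2 b b' h])
  unfold PP
  calc _ = EE p (fun ω => (if A ω then (1:ℝ) else 0) * (if B ω then 1 else 0)) := by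
        congr 1; ext ω
        by_cases hA : A ω <;> by_cases hB : B ω <;> simp [hA, hB]
    _ = _ := this
    _ = EE p (fun a => (EE p fun ω => if B ω then (1:ℝ) else 0) * (if A a then (1:ℝ) else 0)) := by
        congr 1; ext a
        rw [EE_mul, mul_comm]
    _ = _ := by rw [EE_mul, mul_comm]

/-! ### Concentration -/

lemma mgf_step {q g h : α → ℝ} (hq : ∀ y, 0 ≤ q y) (hq1 : ∑ y, q y = 1)
    (hg : ∀ y y', |g y - g y'| ≤ h y + h y') (hh0 : ∀ y, 0 ≤ h y) {b l : ℝ} (hb : ∀ y, h y ≤ b)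
    (hl : 0 ≤ l) (hlb : 2 * b * l ≤ 1) :
    ∑ y, q y * Real.exp (l * g y) ≤
      Real.exp (l * (∑ y, q y * g y) + 4 * l ^ 2 * ∑ y, q y * h y ^ 2) := by
  set μ := ∑ y, q y * g y with hμ
  set H := ∑ y, q y * h y with hH
  set Q := ∑ y, q y * h y ^ 2 with hQ
  have hD : ∀ y, |g y - μ| ≤ h y + H := by
    intro y
    have : g y - μ = ∑ y', q y' * (g y - g y') := by
      simp only [mul_sub, Finset.sum_sub_distrib, ← Finset.sum_mul, hq1, one_mul, hμ]
    rw [this]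
    refine (Finset.abs_sum_le_sum_abs _ _).trans ?_
    have h2 : h y + H = ∑ y', q y' * (h y + h y') := by
      simp only [mul_add, Finset.sum_add_distrib, ← Finset.sum_mul, hq1, one_mul, hH]
    rw [h2]
    apply Finset.sum_le_sum
    intro y' _
    rw [abs_mul, abs_of_nonneg (hq y')]
    exact mul_le_mul_of_nonneg_left (hg y y') (hq y')
  have hHb : H ≤ b := by
    calc H ≤ ∑ y, q y * b := Finset.sum_le_sum fun y _ => mul_le_mul_of_nonneg_left (hb y) (hq y)
      _ = b := by rw [← Finset.sum_mul, hq1, one_mul]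
  have hH0 : 0 ≤ H := Finset.sum_nonneg fun y _ => mul_nonneg (hq y) (hh0 y)
  have hHQ : H ^ 2 ≤ Q := by
    have : 0 ≤ ∑ y, q y * (h y - H) ^ 2 :=
      Finset.sum_nonneg fun y _ => mul_nonneg (hq y) (sq_nonneg _)
    have h2 : ∑ y, q y * (h y - H) ^ 2 = Q - 2 * H * H + H ^ 2 := by
      have : ∀ y, q y * (h y - H) ^ 2 = q y * h y ^ 2 - 2 * H * (q y * h y) + H ^ 2 * q y := by
        intro y; ring
      simp only [this, Finset.sum_add_distrib, Finset.sum_sub_distrib, ← Finset.mul_sum, hq1, ← hH,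
        ← hQ, mul_one]
    nlinarith
  have hpt : ∀ y, Real.exp (l * (g y - μ)) ≤
      1 + l * (g y - μ) + l ^ 2 * (2 * h y ^ 2 + 2 * H ^ 2) := by
    intro y
    have h1 : |l * (g y - μ)| ≤ 1 := by
      rw [abs_mul, abs_of_nonneg hl]
      have : l * |g y - μ| ≤ l * (b + b) :=
        mul_le_mul_of_nonneg_left ((hD y).trans (add_le_add (hb y) hHb)) hl
      linarith
    have h2 := Real.abs_exp_sub_one_sub_id_le h1
    have h3 := (abs_le.mp h2).2
    have h4 : (g y - μ) ^ 2 ≤ 2 * h y ^ 2 + 2 * H ^ 2 := by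
      have : (g y - μ) ^ 2 ≤ (h y + H) ^ 2 := by
        rw [← sq_abs (g y - μ)]
        exact pow_le_pow_left₀ (abs_nonneg _) (hD y) 2
      nlinarith [sq_nonneg (h y - H)]
    have h5 := mul_le_mul_of_nonneg_left h4 (sq_nonneg l)
    nlinarith
  have hsum : ∑ y, q y * Real.exp (l * (g y - μ)) ≤ 1 + 4 * l ^ 2 * Q := by
    calc _ ≤ ∑ y, q y * (1 + l * (g y - μ) + l ^ 2 * (2 * h y ^ 2 + 2 * H ^ 2)) :=
          Finset.sum_le_sum fun y _ => mul_le_mul_of_nonneg_left (hpt y) (hq y)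
      _ = 1 + l ^ 2 * (2 * Q + 2 * H ^ 2) := by
          have : ∀ y, q y * (1 + l * (g y - μ) + l ^ 2 * (2 * h y ^ 2 + 2 * H ^ 2)) =
            q y * (1 - l * μ + 2 * l ^ 2 * H ^ 2) + l * (q y * g y)
              + (2 * l ^ 2) * (q y * h y ^ 2) := by
            intro y; ring
          simp only [this, Finset.sum_add_distrib, ← Finset.mul_sum, ← Finset.sum_mul, hq1, ← hμ,
            ← hQ]
          ring
      _ ≤ _ := by nlinarith [mul_le_mul_of_nonneg_left hHQ (sq_nonneg l)]
  have : ∑ y, q y * Real.exp (l * g y)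
      = Real.exp (l * μ) * ∑ y, q y * Real.exp (l * (g y - μ)) := by
    rw [Finset.mul_sum]
    apply Finset.sum_congr rfl
    intro y _
    rw [mul_left_comm, ← Real.exp_add]
    congr 2; ring
  rw [this, Real.exp_add]
  apply mul_le_mul_of_nonneg_left _ (Real.exp_pos _).le
  refine hsum.trans ?_
  have := Real.add_one_le_exp (4 * l ^ 2 * Q)
  linarith

/-- Averaging one coordinate. -/
noncomputable def Avg (p : ι → α → ℝ) (i : ι) (f : (ι → α) → ℝ) (ω : ι → α) : ℝ :=
  ∑ y, p i y * f (Function.update ω i y)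

lemma EE_Avg (hp : IsW p) (i : ι) (f : (ι → α) → ℝ) : EE p (Avg p i f) = EE p f := by
  have h := EE_decouple hp (fun a b => f (Function.update a i (b i))) {i}
    (fun a a' b h => by
      congr 1
      ext j
      by_cases hj : j = i
      · subst hj; simp
      · simp [hj, h j (by simpa using hj)])
    (fun a b b' h => by rw [h i (by simp)])
  simp only [Function.update_eq_self] at h
  rw [h]
  congr 1
  ext a
  unfold Avg
  classical
  have h3 : ∀ b : ι → α, f (Function.update a i (b i)) =
      ∑ y, f (Function.update a i y) *
        ∏ j, (if j = i then (if b j = y then 1 else 0) else (1:ℝ)) := by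
    intro b
    simp [Finset.prod_ite_eq']
  simp only [h3]
  rw [EE_sum]
  apply Finset.sum_congr rfl
  intro y _
  rw [EE_mul, EE_prod p (fun j z => if j = i then (if z = y then 1 else 0) else (1:ℝ))]
  rw [mul_comm]
  congr 1
  rw [Finset.prod_eq_single i]
  · simp
  · intro j _ hj
    simp [hj, hp.2]
  · simp

lemma mgf_bound (hp : IsW p) (h : ι → α → ℝ) (hh0 : ∀ i y, 0 ≤ h i y) {b l : ℝ}
    (hb : ∀ i y, h i y ≤ b) (hl : 0 ≤ l) (hlb : 2 * b * l ≤ 1) (S : Finset ι) :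
    ∀ f : (ι → α) → ℝ,
      (∀ i ω y, |f ω - f (Function.update ω i y)| ≤ h i (ω i) + h i y) →
      (∀ i, i ∉ S → ∀ ω y, f (Function.update ω i y) = f ω) →
      EE p (fun ω => Real.exp (l * f ω)) ≤
        Real.exp (l * EE p f + 4 * l ^ 2 * ∑ i ∈ S, ∑ y, p i y * h i y ^ 2) := by
  induction S using Finset.induction_on with
  | empty =>
    intro f _ hd
    have hc : ∀ ω ω', f ω = f ω' := by
      have key : ∀ T : Finset ι, ∀ ω ω', (∀ i, i ∉ T → ω i = ω' i) → f ω = f ω' := by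
        intro T
        induction T using Finset.induction_on with
        | empty => intro ω ω' h; congr 1; ext i; exact h i (by simp)
        | insert i T _ ih =>
          intro ω ω' h
          rw [← hd i (by simp) ω (ω' i)]
          apply ih
          intro j hj
          by_cases hji : j = i
          · subst hji; simp
          · simp only [Function.update_of_ne hji]
            exact h j (by simp [hji, hj])
      intro ω ω'
      exact key Finset.univ ω ω' (by simp)
    by_cases hne : Nonempty (ι → α)
    · obtain ⟨ω0⟩ := hne
      have : f = fun _ => f ω0 := by ext ω; exact hc _ _
      rw [this, EE_const hp, EE_const hp]
      simp
    · have hE : IsEmpty (ι → α) := not_nonempty_iff.mp hne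
      have : EE p (fun ω => Real.exp (l * f ω)) = 0 := by simp [EE]
      rw [this]; exact (Real.exp_pos _).le
  | insert i S hi ih =>
    intro f hf hd
    have h1 : ∀ ω, Avg p i (fun ω => Real.exp (l * f ω)) ω ≤
        Real.exp (4 * l ^ 2 * ∑ y, p i y * h i y ^ 2) * Real.exp (l * Avg p i f ω) := by
      intro ω
      have := mgf_step (q := p i) (g := fun y => f (Function.update ω i y)) (h := h i)
        (hp.1 i) (hp.2 i) (fun y y' => by
          have := hf i (Function.update ω i y) y'
          simpa using this) (hh0 i) (hb i) hl hlb
      rw [← Real.exp_add, add_comm]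
      exact this
    rw [← EE_Avg hp i]
    refine (EE_mono hp h1).trans ?_
    rw [EE_mul]
    have h2 := ih (Avg p i f) (by
      intro j ω y
      by_cases hj : j = i
      · subst hj
        have : Avg p j f (Function.update ω j y) = Avg p j f ω := by simp [Avg]
        rw [this, sub_self, abs_zero]
        exact add_nonneg (hh0 _ _) (hh0 _ _)
      · unfold Avg
        rw [← Finset.sum_sub_distrib]
        refine (Finset.abs_sum_le_sum_abs _ _).trans ?_
        have e : h j (ω j) + h j y = ∑ z, p i z * (h j (ω j) + h j y) := by
          rw [← Finset.sum_mul, hp.2, one_mul]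
        rw [e]
        apply Finset.sum_le_sum
        intro z _
        rw [← mul_sub, abs_mul, abs_of_nonneg (hp.1 i z)]
        apply mul_le_mul_of_nonneg_left _ (hp.1 i z)
        have := hf j (Function.update ω i z) y
        rw [Function.update_comm (Ne.symm hj), Function.update_of_ne hj] at this
        exact this) (by
      intro j hj ω y
      by_cases hji : j = i
      · subst hji; simp [Avg]
      · unfold Avg
        apply Finset.sum_congr rfl
        intro z _
        rw [Function.update_comm hji, hd j (by simp [hji, hj])])
    rw [EE_Avg hp] at h2
    refine (mul_le_mul_of_nonneg_left h2 (Real.exp_pos _).le).trans ?_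
    rw [← Real.exp_add, Finset.sum_insert hi]
    apply le_of_eq
    congr 1; ring

/-- The concentration inequality. -/
lemma conc (hp : IsW p) (f : (ι → α) → ℝ) (h : ι → α → ℝ) (hh0 : ∀ i y, 0 ≤ h i y)
    (hh2 : ∀ i y, h i y ≤ 2)
    (hf : ∀ i ω y, |f ω - f (Function.update ω i y)| ≤ h i (ω i) + h i y)
    {N δ μ : ℝ} (hV : ∑ i, ∑ y, p i y * h i y ^ 2 ≤ 2 * N) (hδ : 0 < δ) (hδ1 : δ ≤ 1)
    (hμ : EE p f ≤ μ) :
    PP p (fun ω => μ + δ * N < f ω) ≤ Real.exp (-(δ ^ 2 * N / 32)) := by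
  classical
  set l := δ / 16 with hl
  have hl0 : 0 < l := by positivity
  have hm := mgf_bound hp h hh0 hh2 hl0.le (by linarith : 2 * 2 * l ≤ 1) Finset.univ f hf
    (by simp)
  have h1 : PP p (fun ω => μ + δ * N < f ω) ≤
      EE p (fun ω => Real.exp (-(l * (μ + δ * N))) * Real.exp (l * f ω)) := by
    apply EE_mono hp
    intro ω
    split_ifs with hB
    · rw [← Real.exp_add]
      apply Real.one_le_exp
      nlinarith
    · positivity
  refine h1.trans ?_
  rw [EE_mul]
  refine (mul_le_mul_of_nonneg_left hm (Real.exp_pos _).le).trans ?_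
  rw [← Real.exp_add]
  apply Real.exp_le_exp.mpr
  have h2 : l * EE p f ≤ l * μ := mul_le_mul_of_nonneg_left hμ hl0.le
  have h3 := mul_le_mul_of_nonneg_left hV (by positivity : 0 ≤ 4 * l ^ 2)
  have h4 : l = δ / 16 := hl
  rw [h4] at *
  nlinarith

/-! ### Local lemma -/

lemma PP_split (B A : (ι → α) → Prop) :
    PP p A = PP p (fun ω => B ω ∧ A ω) + PP p (fun ω => ¬ B ω ∧ A ω) := by
  classical
  unfold PP
  rw [← EE_add]
  congr 1; ext ω
  by_cases hA : A ω <;> by_cases hB : B ω <;> simp [hA, hB]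

lemma lll {V : Type} [Fintype V] [DecidableEq V] (hp : IsW p) (B : V → (ι → α) → Prop)
    (S : V → Finset ι)
    (hS : ∀ v a a', (∀ i, i ∈ S v → a i = a' i) → (B v a ↔ B v a'))
    (q d : ℝ) (hq : ∀ v, PP p (B v) ≤ q) (hd1 : 1 ≤ d)
    (hd : ∀ v, ((Finset.univ.filter fun u => ¬ Disjoint (S v) (S u)).card : ℝ) ≤ d)
    (hqd : 4 * q * d ≤ 1) :
    ∃ ω, (∀ i, p i (ω i) ≠ 0) ∧ ∀ v, ¬ B v ω := by
  by_cases hV : Nonempty V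
  swap
  · have hE : IsEmpty V := not_nonempty_iff.mp hV
    by_contra hcon
    have h1 := EE_const hp (1 : ℝ)
    have : EE p (fun _ => (1 : ℝ)) = 0 := by
      unfold EE
      apply Finset.sum_eq_zero
      intro ω _
      rw [mul_one]
      by_contra hne
      exact hcon ⟨ω, fun i => Finset.prod_ne_zero_iff.mp hne i (Finset.mem_univ i),
        fun v => hE.elim v⟩
    linarith
  obtain ⟨v0⟩ := hV
  have hq0 : 0 ≤ q := (PP_nonneg hp _).trans (hq v0)
  have hq4 : 4 * q ≤ 1 := by nlinarith
  have key : ∀ n : ℕ, ∀ T : Finset V, T.card = n → ∀ v,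
      PP p (fun ω => B v ω ∧ ∀ u ∈ T, ¬ B u ω) ≤ 2 * q * PP p (fun ω => ∀ u ∈ T, ¬ B u ω) := by
    intro n
    induction n using Nat.strong_induction_on with
    | _ n ih =>
      intro T hT v
      set T1 := T.filter fun u => ¬ Disjoint (S v) (S u) with hT1
      set T2 := T.filter fun u => Disjoint (S v) (S u) with hT2
      have hind : PP p (fun ω => B v ω ∧ ∀ u ∈ T2, ¬ B u ω)
          = PP p (B v) * PP p (fun ω => ∀ u ∈ T2, ¬ B u ω) := by
        apply PP_indep hp _ _ (S v)ᶜ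
        · intro a a' h
          apply hS v
          intro i hi
          exact h i (by simpa using hi)
        · intro a a' h
          apply forall_congr'
          intro u
          apply forall_congr'
          intro hu
          rw [hS u a a']
          intro i hi
          apply h
          have := (Finset.mem_filter.mp hu).2
          rw [Finset.mem_compl]
          intro hiv
          exact Finset.disjoint_left.mp this hiv hi
      have hX0 : 0 ≤ PP p (fun ω => ∀ u ∈ T2, ¬ B u ω) := PP_nonneg hp _
      have hA : PP p (fun ω => B v ω ∧ ∀ u ∈ T, ¬ B u ω) ≤
          q * PP p (fun ω => ∀ u ∈ T2, ¬ B u ω) := by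
        calc _ ≤ PP p (fun ω => B v ω ∧ ∀ u ∈ T2, ¬ B u ω) :=
              PP_mono hp fun ω h => ⟨h.1, fun u hu => h.2 u (Finset.mem_filter.mp hu).1⟩
          _ = _ := hind
          _ ≤ _ := mul_le_mul_of_nonneg_right (hq v) hX0
      have hB : PP p (fun ω => ∀ u ∈ T2, ¬ B u ω) ≤ 2 * PP p (fun ω => ∀ u ∈ T, ¬ B u ω) := by
        by_cases hemp : T1 = ∅
        · have : T2 = T := by
            rw [hT2, Finset.filter_eq_self]
            intro u hu
            by_contra hne
            have : u ∈ T1 := Finset.mem_filter.mpr ⟨hu, hne⟩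
            simp [hemp] at this
          rw [this]
          have := PP_nonneg hp (fun ω => ∀ u ∈ T, ¬ B u ω)
          linarith
        · have hlt : T2.card < n := by
            rw [← hT]
            apply Finset.card_lt_card
            rw [Finset.ssubset_iff_subset_ne]
            refine ⟨Finset.filter_subset _ _, ?_⟩
            intro heq
            apply hemp
            rw [Finset.eq_empty_iff_forall_notMem]
            intro u hu
            have hu' := Finset.mem_filter.mp hu
            have : u ∈ T2 := by rw [heq]; exact hu'.1
            exact hu'.2 (Finset.mem_filter.mp this).2
          have hsplit := PP_split (p := p) (fun ω => ∃ u ∈ T1, B u ω)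
            (fun ω => ∀ u ∈ T2, ¬ B u ω)
          have hfirst : PP p (fun ω => (∃ u ∈ T1, B u ω) ∧ ∀ u ∈ T2, ¬ B u ω) ≤
              T1.card * (2 * q * PP p (fun ω => ∀ u ∈ T2, ¬ B u ω)) := by
            calc _ ≤ PP p (fun ω => ∃ w ∈ T1, (B w ω ∧ ∀ u ∈ T2, ¬ B u ω)) :=
                  PP_mono hp fun ω h => by
                    obtain ⟨⟨w, hw, hB⟩, h2⟩ := h
                    exact ⟨w, hw, hB, h2⟩
              _ ≤ _ := PP_exists_le hp _ _ _ fun w _ => ih _ hlt T2 rfl w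
          have hsecond : PP p (fun ω => (¬ ∃ u ∈ T1, B u ω) ∧ ∀ u ∈ T2, ¬ B u ω) ≤
              PP p (fun ω => ∀ u ∈ T, ¬ B u ω) := by
            apply PP_mono hp
            intro ω h u hu
            by_cases hd : Disjoint (S v) (S u)
            · exact h.2 u (Finset.mem_filter.mpr ⟨hu, hd⟩)
            · intro hb
              exact h.1 ⟨u, Finset.mem_filter.mpr ⟨hu, hd⟩, hb⟩
          have hcard : (T1.card : ℝ) ≤ d := by
            refine le_trans ?_ (hd v)
            exact_mod_cast Finset.card_le_card (Finset.filter_subset_filter _ (Finset.subset_univ T))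
          have : T1.card * (2 * q * PP p (fun ω => ∀ u ∈ T2, ¬ B u ω)) ≤
              (1 / 2) * PP p (fun ω => ∀ u ∈ T2, ¬ B u ω) := by
            have h5 : (T1.card : ℝ) * (2 * q) ≤ 1 / 2 := by nlinarith
            nlinarith
          linarith
      nlinarith
  have pos : ∀ T : Finset V, 0 < PP p (fun ω => ∀ u ∈ T, ¬ B u ω) := by
    intro T
    induction T using Finset.induction_on with
    | empty =>
      have : PP p (fun ω => ∀ u ∈ (∅ : Finset V), ¬ B u ω) = 1 := by
        unfold PP
        simp only [Finset.notMem_empty, false_imp_iff, implies_true, if_true]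
        exact EE_const hp 1
      rw [this]; norm_num
    | insert v T hv ih =>
      have h1 := PP_split (p := p) (B v) (fun ω => ∀ u ∈ T, ¬ B u ω)
      have h2 := key _ T rfl v
      have h3 : PP p (fun ω => ¬ B v ω ∧ ∀ u ∈ T, ¬ B u ω) ≤
          PP p (fun ω => ∀ u ∈ insert v T, ¬ B u ω) := by
        apply PP_mono hp
        intro ω h u hu
        rcases Finset.mem_insert.mp hu with rfl | hu
        · exact h.1
        · exact h.2 u hu
      nlinarith
  have hfin := pos Finset.univ
  by_contra hcon
  push Not at hcon
  have : PP p (fun ω => ∀ u ∈ Finset.univ, ¬ B u ω) = 0 := by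
    unfold PP EE
    apply Finset.sum_eq_zero
    intro ω _
    by_cases hω : ∀ i, p i (ω i) ≠ 0
    · obtain ⟨v, hv⟩ := hcon ω hω
      simp only
      rw [if_neg, mul_zero]
      intro h
      exact h v (Finset.mem_univ v) hv
    · push Not at hω
      obtain ⟨i, hi⟩ := hω
      rw [Finset.prod_eq_zero (Finset.mem_univ i) hi, zero_mul]
  linarith

end Prob


section Events
open scoped Classical

variable {ι α : Type} [Fintype ι] [Fintype α] {p : ι → α → ℝ}

lemma conc' (hp : IsW p) (f : (ι → α) → ℝ) (h : ι → α → ℝ) (hh0 : ∀ i y, 0 ≤ h i y)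
    (hh2 : ∀ i y, h i y ≤ 2)
    (hf : ∀ i ω ω', (∀ j, j ≠ i → ω j = ω' j) → f ω ≤ f ω' + (h i (ω i) + h i (ω' i)))
    {N δ μ : ℝ} (hV : ∑ i, ∑ y, p i y * h i y ^ 2 ≤ 2 * N) (hδ : 0 < δ) (hδ1 : δ ≤ 1)
    (hμ : EE p f ≤ μ) :
    PP p (fun ω => μ + δ * N < f ω) ≤ Real.exp (-(δ ^ 2 * N / 32)) := by
  apply conc hp f h hh0 hh2 _ hV hδ hδ1 hμ
  intro i ω y
  have h1 := hf i ω (Function.update ω i y) (fun j hj => by simp [hj])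
  have h2 := hf i (Function.update ω i y) ω (fun j hj => by simp [hj])
  simp only [Function.update_self] at h1 h2
  rw [abs_le]
  constructor <;> linarith

lemma EE_card {κ : Type} (s : Finset κ) (A : κ → (ι → α) → Prop)
    [∀ ω, DecidablePred fun k => A k ω] :
    EE p (fun ω => ((s.filter fun k => A k ω).card : ℝ)) = ∑ k ∈ s, PP p (A k) := by
  unfold PP
  rw [← EE_sum]
  congr 1; ext ω
  rw [Finset.card_filter]
  push_cast
  exact Finset.sum_congr rfl fun k _ => by congr

/-- Probability that a coordinate takes a given value. -/
lemma PP_coord (hp : IsW p) (i : ι) (y : α) : PP p (fun ω => ω i = y) = p i y := by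
  have h := EE_prod p (fun j z => if j = i then (if z = y then 1 else 0) else (1:ℝ))
  have h1 : ∀ ω : ι → α, (∏ j, if j = i then (if ω j = y then 1 else 0) else (1:ℝ))
      = if ω i = y then 1 else 0 := by
    intro ω; simp [Finset.prod_ite_eq']
  simp only [h1] at h
  unfold PP
  rw [h, Finset.prod_eq_single i]
  · simp
  · intro j _ hj
    simp [hj, hp.2]
  · simp

/-- Coordinates that collide inside `I`. -/
lemma evN1 (hp : IsW p) (I : Finset ι) {N δ β : ℝ} (hN : (I.card : ℝ) ≤ N)
    (hβ : ∀ y, ∑ i ∈ I, p i y ≤ β) (hδ : 0 < δ) (hδ1 : δ ≤ 1) :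
    PP p (fun ω => β * I.card + δ * N <
      ((I.filter fun i => ∃ j ∈ I, j ≠ i ∧ ω j = ω i).card : ℝ)) ≤
      Real.exp (-(δ ^ 2 * N / 32)) := by
  apply conc' hp _ (fun i _ => if i ∈ I then 1 else 0) _ _ _ _ hδ hδ1
  · rw [EE_card I (fun i ω => ∃ j ∈ I, j ≠ i ∧ ω j = ω i)]
    have : ∀ i ∈ I, PP p (fun ω => ∃ j ∈ I, j ≠ i ∧ ω j = ω i) ≤ β := by
      intro i hi
      calc _ = PP p (fun ω => ∃ j ∈ I.erase i, ω j = ω i) := by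
            congr 1; ext ω
            simp only [Finset.mem_erase]
            constructor
            · rintro ⟨j, h1, h2, h3⟩; exact ⟨j, ⟨h2, h1⟩, h3⟩
            · rintro ⟨j, ⟨h2, h1⟩, h3⟩; exact ⟨j, h1, h2, h3⟩
        _ ≤ ∑ j ∈ I.erase i, PP p (fun ω => ω j = ω i) := PP_exists hp _ _
        _ ≤ ∑ j ∈ I.erase i, ∑ y, p i y * p j y := by
            apply Finset.sum_le_sum
            intro j hj
            have hji : j ≠ i := (Finset.mem_erase.mp hj).1
            have h2 : ∀ y, PP p (fun ω => ω i = y ∧ ω j = y) = p i y * p j y := by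
              intro y
              rw [PP_indep hp (fun ω => ω i = y) (fun ω => ω j = y) {j}, PP_coord hp, PP_coord hp]
              · intro a a' h; rw [h i (by simpa using hji.symm)]
              · intro a a' h; rw [h j (by simp)]
            calc _ ≤ PP p (fun ω => ∃ y ∈ Finset.univ, (ω i = y ∧ ω j = y)) :=
                  PP_mono hp fun ω h => ⟨ω i, Finset.mem_univ _, rfl, h⟩
              _ ≤ ∑ y, PP p (fun ω => ω i = y ∧ ω j = y) := PP_exists hp _ _
              _ ≤ _ := by simp only [h2]; rfl
        _ = ∑ y, p i y * ∑ j ∈ I.erase i, p j y := by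
            rw [Finset.sum_comm]
            exact Finset.sum_congr rfl fun y _ => by rw [Finset.mul_sum]
        _ ≤ ∑ y, p i y * β := by
            apply Finset.sum_le_sum
            intro y _
            apply mul_le_mul_of_nonneg_left _ (hp.1 i y)
            refine le_trans ?_ (hβ y)
            exact Finset.sum_le_sum_of_subset_of_nonneg (Finset.erase_subset _ _)
              fun k _ _ => hp.1 k y
        _ = β := by rw [← Finset.sum_mul, hp.2, one_mul]
    refine (Finset.sum_le_sum this).trans ?_
    simp [mul_comm]
  · intro i y
    try dsimp only
    split_ifs <;> norm_num
  · intro i y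
    try dsimp only
    split_ifs <;> norm_num
  · intro i ω ω' hω
    by_cases hi : i ∈ I
    · simp only [hi, if_true]
      have hsub : (I.filter fun k => ∃ j ∈ I, j ≠ k ∧ ω j = ω k) ⊆
          (I.filter fun k => ∃ j ∈ I, j ≠ k ∧ ω' j = ω' k) ∪ ({i} ∪
            (I.filter fun k => k ≠ i ∧ ω k = ω i ∧ ∀ j ∈ I, j ≠ i → j ≠ k → ω j ≠ ω k)) := by
        intro k hk
        simp only [Finset.mem_filter, Finset.mem_union, Finset.mem_singleton] at hk ⊢
        obtain ⟨hkI, j, hj, hjk, he⟩ := hk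
        by_cases hki : k = i
        · right; left; exact hki
        · by_cases hex : ∃ j ∈ I, j ≠ i ∧ j ≠ k ∧ ω j = ω k
          · left
            obtain ⟨j', hj', hj'i, hj'k, he'⟩ := hex
            exact ⟨hkI, j', hj', hj'k, by rw [← hω j' hj'i, ← hω k hki, he']⟩
          · right; right
            push Not at hex
            refine ⟨hkI, hki, ?_, fun j hj h1 h2 => hex j hj h1 h2⟩
            by_cases hji : j = i
            · rw [← hji, he]
            · exact absurd he (hex j hj hji hjk)
      have hc : (I.filter fun k => k ≠ i ∧ ω k = ω i ∧
          ∀ j ∈ I, j ≠ i → j ≠ k → ω j ≠ ω k).card ≤ 1 := by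
        rw [Finset.card_le_one]
        intro a ha b hb
        simp only [Finset.mem_filter] at ha hb
        by_contra hab
        exact ha.2.2.2 b hb.1 hb.2.1 (Ne.symm hab) (by rw [hb.2.2.1, ha.2.2.1])
      have := (Finset.card_le_card hsub).trans (Finset.card_union_le _ _)
      have h3 := Finset.card_union_le ({i} : Finset ι) (I.filter fun k => k ≠ i ∧ ω k = ω i ∧
          ∀ j ∈ I, j ≠ i → j ≠ k → ω j ≠ ω k)
      rw [Finset.card_singleton] at h3
      have h4 : (I.filter fun k => ∃ j ∈ I, j ≠ k ∧ ω j = ω k).card ≤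
        (I.filter fun k => ∃ j ∈ I, j ≠ k ∧ ω' j = ω' k).card + (1 + 1) := by omega
      exact_mod_cast h4
    · simp only [hi, if_false, add_zero]
      apply le_of_eq
      congr 2
      ext k
      simp only [Finset.mem_filter, and_congr_right_iff]
      intro hk
      have hki : k ≠ i := fun h => hi (h ▸ hk)
      constructor
      · rintro ⟨j, hj, h1, h2⟩
        refine ⟨j, hj, h1, ?_⟩
        have hji : j ≠ i := fun h => hi (h ▸ hj)
        rw [← hω j hji, ← hω k hki, h2]
      · rintro ⟨j, hj, h1, h2⟩
        refine ⟨j, hj, h1, ?_⟩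
        have hji : j ≠ i := fun h => hi (h ▸ hj)
        rw [hω j hji, hω k hki, h2]
  · have : ∀ i, ∑ y, p i y * (if i ∈ I then (1:ℝ) else 0) ^ 2 = if i ∈ I then 1 else 0 := by
      intro i
      rw [← Finset.sum_mul, hp.2]
      split_ifs <;> norm_num
    simp only [this]
    rw [Finset.sum_ite_mem, Finset.univ_inter]
    simp only [Finset.sum_const, nsmul_eq_mul, mul_one]
    have : (0:ℝ) ≤ I.card := by positivity
    linarith

/-- Collisions of coordinates in `I` with coordinates in outside sets. -/
lemma evN2 (hp : IsW p) (I : Finset ι) (J : ι → Finset ι) {N δ β : ℝ} (hN : (I.card : ℝ) ≤ N)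
    (hJ : ∀ i ∈ I, ∀ j ∈ J i, j ∉ I)
    (hβ : ∀ i ∈ I, ∀ y, ∑ j ∈ J i, p j y ≤ β) (hβ1 : β ≤ 1)
    (hJ2 : ∀ j, (I.filter fun i => j ∈ J i).card ≤ 2) (hδ : 0 < δ) (hδ1 : δ ≤ 1) :
    PP p (fun ω => β * I.card + δ * N <
      ((I.filter fun i => ∃ j ∈ J i, ω j = ω i).card : ℝ)) ≤
      Real.exp (-(δ ^ 2 * N / 32)) := by
  have hdec := EE_decouple hp (fun a ω => if (β * I.card + δ * N <
      ((I.filter fun i => ∃ j ∈ J i, ω j = a i).card : ℝ)) then (1:ℝ) else 0) Iᶜ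
    (by
      intro a a' b h
      have : (I.filter fun i => ∃ j ∈ J i, b j = a i) = (I.filter fun i => ∃ j ∈ J i, b j = a' i) := by
        apply Finset.filter_congr
        intro i hi
        rw [h i (by simpa using hi)]
      simp only [this])
    (by
      intro a b b' h
      have : (I.filter fun i => ∃ j ∈ J i, b j = a i) = (I.filter fun i => ∃ j ∈ J i, b' j = a i) := by
        apply Finset.filter_congr
        intro i hi
        apply exists_congr
        intro j
        apply and_congr_right
        intro hj
        rw [h j (by simpa using hJ i hi j hj)]
      simp only [this])
  unfold PP
  rw [hdec]
  rw [← EE_const hp (Real.exp (-(δ ^ 2 * N / 32)))]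
  apply EE_mono hp
  intro a
  have main : PP p (fun ω => β * I.card + δ * N <
      ((I.filter fun i => ∃ j ∈ J i, ω j = a i).card : ℝ)) ≤ Real.exp (-(δ ^ 2 * N / 32)) := by
    apply conc' hp _ (fun j y => ((I.filter fun i => j ∈ J i ∧ y = a i).card : ℝ)) _ _ _ _ hδ hδ1
    · rw [EE_card I (fun i ω => ∃ j ∈ J i, ω j = a i)]
      have : ∀ i ∈ I, PP p (fun ω => ∃ j ∈ J i, ω j = a i) ≤ β := by
        intro i hi
        refine (PP_exists hp _ _).trans ?_
        simp only [PP_coord hp]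
        exact hβ i hi _
      refine (Finset.sum_le_sum this).trans ?_
      simp [mul_comm]
    · intro i y; positivity
    · intro j y
      have : (I.filter fun i => j ∈ J i ∧ y = a i).card ≤ 2 := by
        refine le_trans (Finset.card_le_card ?_) (hJ2 j)
        intro i hi
        simp only [Finset.mem_filter] at hi ⊢
        exact ⟨hi.1, hi.2.1⟩
      exact_mod_cast this
    · intro j ω ω' hω
      have hsub : (I.filter fun i => ∃ j ∈ J i, ω j = a i) ⊆
          (I.filter fun i => ∃ j ∈ J i, ω' j = a i) ∪ (I.filter fun i => j ∈ J i ∧ ω j = a i) := by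
        intro i hi
        simp only [Finset.mem_filter, Finset.mem_union] at hi ⊢
        obtain ⟨hiI, k, hk, he⟩ := hi
        by_cases hkj : k = j
        · right; subst hkj; exact ⟨hiI, hk, he⟩
        · left; exact ⟨hiI, k, hk, by rw [← hω k hkj, he]⟩
      have h1 := (Finset.card_le_card hsub).trans (Finset.card_union_le _ _)
      have h2 : ((I.filter fun i => ∃ j ∈ J i, ω j = a i).card : ℝ) ≤
        (I.filter fun i => ∃ j ∈ J i, ω' j = a i).card +
          (I.filter fun i => j ∈ J i ∧ ω j = a i).card := by exact_mod_cast h1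
      have h3 : (0:ℝ) ≤ (I.filter fun i => j ∈ J i ∧ ω' j = a i).card := by positivity
      linarith
    · have hb : ∀ j y, p j y * ((I.filter fun i => j ∈ J i ∧ y = a i).card : ℝ) ^ 2 ≤
          2 * ∑ i ∈ I, if j ∈ J i ∧ y = a i then p j y else 0 := by
        intro j y
        have h2 : ((I.filter fun i => j ∈ J i ∧ y = a i).card : ℝ) ≤ 2 := by
          have : (I.filter fun i => j ∈ J i ∧ y = a i).card ≤ 2 := by
            refine le_trans (Finset.card_le_card ?_) (hJ2 j)
            intro i hi
            simp only [Finset.mem_filter] at hi ⊢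
            exact ⟨hi.1, hi.2.1⟩
          exact_mod_cast this
        rw [← Finset.sum_filter, Finset.sum_const, nsmul_eq_mul]
        have h3 : (0:ℝ) ≤ (I.filter fun i => j ∈ J i ∧ y = a i).card := by positivity
        nlinarith [mul_nonneg (hp.1 j y) h3]
      calc _ ≤ ∑ j, ∑ y, 2 * ∑ i ∈ I, if j ∈ J i ∧ y = a i then p j y else 0 :=
            Finset.sum_le_sum fun j _ => Finset.sum_le_sum fun y _ => hb j y
        _ = 2 * ∑ i ∈ I, ∑ j, ∑ y, if j ∈ J i ∧ y = a i then p j y else 0 := by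
            simp only [← Finset.mul_sum]
            congr 1
            rw [Finset.sum_comm]
            simp only [Finset.sum_comm (s := Finset.univ) (t := I)]
            rw [Finset.sum_congr rfl]
            intro i _
            rw [Finset.sum_comm]
        _ = 2 * ∑ i ∈ I, ∑ j ∈ J i, p j (a i) := by
            congr 1
            apply Finset.sum_congr rfl
            intro i _
            simp only [ite_and]
            rw [← Finset.sum_filter_add_sum_filter_not Finset.univ (fun j => j ∈ J i)]
            rw [Finset.sum_eq_zero (s := Finset.univ.filter fun j => ¬ j ∈ J i), add_zero]
            · have : Finset.univ.filter (fun j => j ∈ J i) = J i := by ext; simp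
              rw [this]
              apply Finset.sum_congr rfl
              intro j hj
              simp [hj]
            · intro j hj
              simp [(Finset.mem_filter.mp hj).2]
        _ ≤ 2 * ∑ i ∈ I, (1:ℝ) := by
            apply mul_le_mul_of_nonneg_left _ (by norm_num)
            exact Finset.sum_le_sum fun i hi => (hβ i hi _).trans hβ1
        _ ≤ _ := by simp; linarith
  exact main

variable {V C : Type} [Fintype C]

/-- Colour `c` survives at `v`. -/
def Surv (inc : ι → Finset V) (v : V) (c : C) (ω : ι → Option C) : Prop :=
  ∀ i, v ∈ inc i → ω i ≠ some c

lemma PP_surv {p : ι → Option C → ℝ} (hp : IsW p) (inc : ι → Finset V) (W : Finset V) (c : C) :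
    PP p (fun ω => ∀ v ∈ W, Surv inc v c ω) =
      ∏ i, (1 - if ∃ v ∈ W, v ∈ inc i then p i (some c) else 0) := by
  have h := EE_prod p (fun i z => if (∃ v ∈ W, v ∈ inc i) ∧ z = some c then 0 else (1:ℝ))
  have h1 : ∀ ω : ι → Option C,
      (∏ i, if (∃ v ∈ W, v ∈ inc i) ∧ ω i = some c then 0 else (1:ℝ)) =
        if ∀ v ∈ W, Surv inc v c ω then 1 else 0 := by
    intro ω
    split_ifs with hs
    · apply Finset.prod_eq_one
      intro i _
      rw [if_neg]
      rintro ⟨⟨v, hv, hvi⟩, he⟩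
      exact hs v hv i hvi he
    · unfold Surv at hs
      push Not at hs
      obtain ⟨v, hv, i, hvi, he⟩ := hs
      apply Finset.prod_eq_zero (Finset.mem_univ i)
      rw [if_pos ⟨⟨v, hv, hvi⟩, he⟩]
  simp only [h1] at h
  refine Eq.trans (by unfold PP; congr!) (h.trans ?_)
  apply Finset.prod_congr rfl
  intro i _
  by_cases hi : ∃ v ∈ W, v ∈ inc i
  · simp only [hi, true_and, if_true]
    have : ∀ y, p i y * (if y = some c then 0 else (1:ℝ)) =
        p i y - (if y = some c then p i y else 0) := by
      intro y; split_ifs <;> simp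
    simp only [this, Finset.sum_sub_distrib, hp.2]
    simp
  · simp only [hi, false_and, if_false]
    simp [hp.2]

lemma evL {p : ι → Option C → ℝ} (hp : IsW p) (inc : ι → Finset V) {κ δ : ℝ}
    (H1 : ∀ v c, ∏ i, (1 - if v ∈ inc i then p i (some c) else 0) = κ)
    (H2 : ∀ v c, ∑ i, (if v ∈ inc i then p i (some c) else 0) ≤ 1)
    (u v : V) (Λ : Finset C) (hδ : 0 < δ) (hδ1 : δ ≤ 1) :
    PP p (fun ω => ((Λ.filter fun c => Surv inc u c ω ∧ Surv inc v c ω).card : ℝ)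
      < (κ ^ 2 - δ) * Λ.card) ≤ Real.exp (-(δ ^ 2 * Λ.card / 32)) := by
  have hple : ∀ i y, p i y ≤ 1 := by
    intro i y
    rw [← hp.2 i]
    exact Finset.single_le_sum (f := p i) (fun z _ => hp.1 i z) (Finset.mem_univ y)
  have hS2 : ∀ c, κ ^ 2 ≤ PP p (fun ω => Surv inc u c ω ∧ Surv inc v c ω) := by
    intro c
    have : (fun ω : ι → Option C => Surv inc u c ω ∧ Surv inc v c ω) =
        fun ω => ∀ w ∈ ({u, v} : Finset V), Surv inc w c ω := by
      ext ω; simp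
    rw [this, PP_surv hp]
    calc κ ^ 2 = ∏ i, ((1 - if u ∈ inc i then p i (some c) else 0) *
          (1 - if v ∈ inc i then p i (some c) else 0)) := by
          rw [Finset.prod_mul_distrib, H1, H1]; ring
      _ ≤ _ := by
          apply Finset.prod_le_prod
          · intro i _
            have := hple i (some c)
            apply mul_nonneg <;> split_ifs <;> linarith
          · intro i _
            have h1 := hple i (some c)
            have h0 := hp.1 i (some c)
            by_cases hu : u ∈ inc i <;> by_cases hv : v ∈ inc i <;> simp [hu, hv]
            nlinarith
  refine le_trans (PP_mono hp (B := fun ω => -(κ ^ 2 * Λ.card) + δ * Λ.card <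
    -((Λ.filter fun c => Surv inc u c ω ∧ Surv inc v c ω).card : ℝ)) ?_) ?_
  · intro ω h; linarith
  apply conc' hp _ (fun i y => if (u ∈ inc i ∨ v ∈ inc i) ∧ ∃ c ∈ Λ, y = some c then 1 else 0)
    _ _ _ _ hδ hδ1
  · rw [EE_neg, EE_card Λ (fun c ω => Surv inc u c ω ∧ Surv inc v c ω)]
    apply neg_le_neg
    have := Finset.sum_le_sum (s := Λ) fun c _ => hS2 c
    refine le_trans (le_of_eq ?_) this
    simp [mul_comm]
  · intro i y
    try dsimp only
    split_ifs <;> norm_num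
  · intro i y
    try dsimp only
    split_ifs <;> norm_num
  · intro i ω ω' hω
    have hsub : (Λ.filter fun c => Surv inc u c ω' ∧ Surv inc v c ω') ⊆
        (Λ.filter fun c => Surv inc u c ω ∧ Surv inc v c ω) ∪
        (Λ.filter fun c => (u ∈ inc i ∨ v ∈ inc i) ∧ ω i = some c) := by
      intro c hc
      simp only [Finset.mem_filter, Finset.mem_union] at hc ⊢
      obtain ⟨hcΛ, h1, h2⟩ := hc
      by_cases hs : Surv inc u c ω ∧ Surv inc v c ω
      · left; exact ⟨hcΛ, hs⟩
      · right
        refine ⟨hcΛ, ?_⟩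
        rw [not_and_or] at hs
        rcases hs with hs | hs
        · unfold Surv at hs
          push Not at hs
          obtain ⟨j, hj, he⟩ := hs
          by_cases hji : j = i
          · subst hji; exact ⟨Or.inl hj, he⟩
          · exact absurd (by rw [← hω j hji, he]) (h1 j hj)
        · unfold Surv at hs
          push Not at hs
          obtain ⟨j, hj, he⟩ := hs
          by_cases hji : j = i
          · subst hji; exact ⟨Or.inr hj, he⟩
          · exact absurd (by rw [← hω j hji, he]) (h2 j hj)
    have h1 := (Finset.card_le_card hsub).trans (Finset.card_union_le _ _)
    have h2 : ((Λ.filter fun c => Surv inc u c ω' ∧ Surv inc v c ω').card : ℝ) ≤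
        (Λ.filter fun c => Surv inc u c ω ∧ Surv inc v c ω).card +
        (Λ.filter fun c => (u ∈ inc i ∨ v ∈ inc i) ∧ ω i = some c).card := by exact_mod_cast h1
    have h3 : ((Λ.filter fun c => (u ∈ inc i ∨ v ∈ inc i) ∧ ω i = some c).card : ℝ) ≤
        if (u ∈ inc i ∨ v ∈ inc i) ∧ ∃ c ∈ Λ, ω i = some c then 1 else 0 := by
      split_ifs with hh
      · have : (Λ.filter fun c => (u ∈ inc i ∨ v ∈ inc i) ∧ ω i = some c).card ≤ 1 := by
          rw [Finset.card_le_one]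
          intro a ha b hb
          simp only [Finset.mem_filter] at ha hb
          have := ha.2.2.symm.trans hb.2.2
          simpa using this
        exact_mod_cast this
      · rw [Finset.filter_eq_empty_iff.mpr]
        · simp
        · intro c hc h
          exact hh ⟨h.1, c, hc, h.2⟩
    have h4 : (0:ℝ) ≤ if (u ∈ inc i ∨ v ∈ inc i) ∧ ∃ c ∈ Λ, ω' i = some c then 1 else 0 := by
      split_ifs <;> norm_num
    linarith
  · have hb : ∀ i, ∑ y, p i y * (if (u ∈ inc i ∨ v ∈ inc i) ∧ ∃ c ∈ Λ, y = some c then (1:ℝ) else 0) ^ 2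
        ≤ ∑ c ∈ Λ, ((if u ∈ inc i then p i (some c) else 0) +
            (if v ∈ inc i then p i (some c) else 0)) := by
      intro i
      rw [Fintype.sum_option]
      have e1 : (if (u ∈ inc i ∨ v ∈ inc i) ∧ ∃ c ∈ Λ, (none : Option C) = some c then (1:ℝ) else 0) = 0 := by
        rw [if_neg]; rintro ⟨_, c, _, h⟩; simp at h
      rw [e1]
      have e2 : ∀ c : C, p i (some c) * (if (u ∈ inc i ∨ v ∈ inc i) ∧ ∃ c' ∈ Λ, some c = some c' then (1:ℝ) else 0) ^ 2
          = if c ∈ Λ then (if u ∈ inc i ∨ v ∈ inc i then p i (some c) else 0) else 0 := by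
        intro c
        by_cases hc : c ∈ Λ <;> by_cases hu : u ∈ inc i ∨ v ∈ inc i <;> simp [hc, hu]
      simp only [e2]
      rw [Finset.sum_ite_mem, Finset.univ_inter]
      simp only [ne_eq, OfNat.ofNat_ne_zero, not_false_eq_true, zero_pow, mul_zero, zero_add]
      apply Finset.sum_le_sum
      intro c _
      have h0 := hp.1 i (some c)
      by_cases hu : u ∈ inc i <;> by_cases hv : v ∈ inc i <;> simp [hu, hv, h0]
    calc _ ≤ ∑ i, ∑ c ∈ Λ, ((if u ∈ inc i then p i (some c) else 0) +
            (if v ∈ inc i then p i (some c) else 0)) := Finset.sum_le_sum fun i _ => hb i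
      _ = ∑ c ∈ Λ, ∑ i, ((if u ∈ inc i then p i (some c) else 0) +
            (if v ∈ inc i then p i (some c) else 0)) := Finset.sum_comm
      _ ≤ ∑ c ∈ Λ, (2:ℝ) := by
          apply Finset.sum_le_sum
          intro c _
          rw [Finset.sum_add_distrib]
          have := H2 u c
          have := H2 v c
          linarith
      _ = _ := by simp [mul_comm]

lemma evT {p : ι → Option C → ℝ} (hp : IsW p) (inc : ι → Finset V) {κ δ N : ℝ}
    (hinc : ∀ i, (inc i).card ≤ 2)
    (H1 : ∀ v c, ∏ i, (1 - if v ∈ inc i then p i (some c) else 0) = κ)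
    (H2 : ∀ v c, ∑ i, (if v ∈ inc i then p i (some c) else 0) ≤ 1)
    (T : Finset V) (c : C) (hN : (T.card : ℝ) ≤ N) (hδ : 0 < δ) (hδ1 : δ ≤ 1) :
    PP p (fun ω => κ * T.card + δ * N < ((T.filter fun x => Surv inc x c ω).card : ℝ)) ≤
      Real.exp (-(δ ^ 2 * N / 32)) := by
  have hS : ∀ v, PP p (fun ω => Surv inc v c ω) = κ := by
    intro v
    have := PP_surv hp inc {v} c
    simp only [Finset.mem_singleton, forall_eq, exists_eq_left, H1] at this
    exact this
  have hcard2 : ∀ i, (T.filter fun x => x ∈ inc i).card ≤ 2 := by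
    intro i
    refine le_trans (Finset.card_le_card ?_) (hinc i)
    intro x hx
    exact (Finset.mem_filter.mp hx).2
  have hcard2' : ∀ i, ((T.filter fun x => x ∈ inc i).card : ℝ) ≤ 2 := by
    intro i; exact_mod_cast hcard2 i
  apply conc' hp _ (fun i y => if y = some c then ((T.filter fun x => x ∈ inc i).card : ℝ) else 0)
    _ _ _ _ hδ hδ1
  · rw [EE_card T (fun x ω => Surv inc x c ω)]
    simp [hS, mul_comm]
  · intro i y
    try dsimp only
    split_ifs <;> positivity
  · intro i y
    try dsimp only
    split_ifs
    · exact hcard2' i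
    · norm_num
  · intro i ω ω' hω
    have hsub : (T.filter fun x => Surv inc x c ω) ⊆
        (T.filter fun x => Surv inc x c ω') ∪
        (T.filter fun x => x ∈ inc i ∧ ω' i = some c) := by
      intro x hx
      simp only [Finset.mem_filter, Finset.mem_union] at hx ⊢
      obtain ⟨hxT, h1⟩ := hx
      by_cases hs : Surv inc x c ω'
      · left; exact ⟨hxT, hs⟩
      · right
        refine ⟨hxT, ?_⟩
        unfold Surv at hs
        push Not at hs
        obtain ⟨j, hj, he⟩ := hs
        by_cases hji : j = i
        · subst hji; exact ⟨hj, he⟩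
        · exact absurd (by rw [hω j hji, he]) (h1 j hj)
    have h1 := (Finset.card_le_card hsub).trans (Finset.card_union_le _ _)
    have h2 : ((T.filter fun x => Surv inc x c ω).card : ℝ) ≤
        (T.filter fun x => Surv inc x c ω').card +
        (T.filter fun x => x ∈ inc i ∧ ω' i = some c).card := by exact_mod_cast h1
    have h3 : ((T.filter fun x => x ∈ inc i ∧ ω' i = some c).card : ℝ) ≤
        if ω' i = some c then ((T.filter fun x => x ∈ inc i).card : ℝ) else 0 := by
      split_ifs with hh
      · simp [hh]
      · simp [hh]
    have h4 : (0:ℝ) ≤ if ω i = some c then ((T.filter fun x => x ∈ inc i).card : ℝ) else 0 := by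
      split_ifs <;> positivity
    linarith
  · have hb : ∀ i, ∑ y, p i y * (if y = some c then ((T.filter fun x => x ∈ inc i).card : ℝ) else 0) ^ 2
        ≤ 2 * ∑ x ∈ T, (if x ∈ inc i then p i (some c) else 0) := by
      intro i
      rw [Finset.sum_eq_single (some c)]
      · simp only [if_true]
        rw [← Finset.sum_filter, Finset.sum_const, nsmul_eq_mul]
        have h3 : (0:ℝ) ≤ (T.filter fun x => x ∈ inc i).card := by positivity
        nlinarith [mul_nonneg (hp.1 i (some c)) h3, hcard2' i]
      · intro y _ hy; simp [hy]
      · simp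
    calc _ ≤ ∑ i, 2 * ∑ x ∈ T, (if x ∈ inc i then p i (some c) else 0) :=
          Finset.sum_le_sum fun i _ => hb i
      _ = 2 * ∑ x ∈ T, ∑ i, (if x ∈ inc i then p i (some c) else 0) := by
          rw [← Finset.mul_sum, Finset.sum_comm]
      _ ≤ 2 * ∑ x ∈ T, (1:ℝ) := by
          apply mul_le_mul_of_nonneg_left _ (by norm_num)
          exact Finset.sum_le_sum fun x _ => H2 x c
      _ ≤ _ := by simp; linarith

end Events


section RoundSpace
open scoped Classical

variable {V C : Type} [Fintype V] [Fintype C]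

/-- Probability that edge `e` picks colour `c`. -/
noncomputable def pe (Lt : Sym2 V → Finset C) (e : Sym2 V) (c : C) : ℝ :=
  if c ∈ Lt e then ((Lt e).card : ℝ)⁻¹ else 0

/-- Probability that no edge of `A` at `v` picks `c`. -/
noncomputable def qq (A : Finset (Sym2 V)) (Lt : Sym2 V → Finset C) (v : V) (c : C) : ℝ :=
  ∏ e ∈ A.filter (fun e => v ∈ e), (1 - pe Lt e c)

/-- The weights of the random round, including the equalising coin flips. -/
noncomputable def wt (A : Finset (Sym2 V)) (Lt : Sym2 V → Finset C) (κ : ℝ) :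
    Sym2 V ⊕ (V × C) → Option C → ℝ
  | Sum.inl e, none => if e ∈ A then 0 else 1
  | Sum.inl e, some c => if e ∈ A then pe Lt e c else 0
  | Sum.inr (v, c), none => κ / qq A Lt v c
  | Sum.inr (v, c), some c' => if c' = c then 1 - κ / qq A Lt v c else 0

/-- Vertices touched by a coordinate. -/
noncomputable def ic (A : Finset (Sym2 V)) : Sym2 V ⊕ (V × C) → Finset V
  | Sum.inl e => if e ∈ A then Finset.univ.filter (fun v => v ∈ e) else ∅
  | Sum.inr (v, _) => {v}

lemma pe_nonneg (Lt : Sym2 V → Finset C) (e : Sym2 V) (c : C) : 0 ≤ pe Lt e c := by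
  unfold pe; split_ifs <;> positivity

lemma prod_one_sub_bounds {κ : Type} (s : Finset κ) (f : κ → ℝ) (h0 : ∀ i ∈ s, 0 ≤ f i)
    (h1 : ∑ i ∈ s, f i ≤ 1) : 1 - ∑ i ∈ s, f i ≤ ∏ i ∈ s, (1 - f i) ∧ ∏ i ∈ s, (1 - f i) ≤ 1 := by
  induction s using Finset.induction_on with
  | empty => simp
  | insert a s ha ih =>
    rw [Finset.sum_insert ha] at h1 ⊢
    rw [Finset.prod_insert ha]
    have ha0 := h0 a (Finset.mem_insert_self _ _)
    have hs0 : 0 ≤ ∑ i ∈ s, f i :=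
      Finset.sum_nonneg fun i hi => h0 i (Finset.mem_insert_of_mem hi)
    obtain ⟨i1, i2⟩ := ih (fun i hi => h0 i (Finset.mem_insert_of_mem hi)) (by linarith)
    constructor
    · nlinarith
    · nlinarith

lemma qq_bounds {A : Finset (Sym2 V)} {Lt : Sym2 V → Finset C} {β : ℝ} (hβ1 : β ≤ 1 / 2)
    (hβ : ∀ v c, ∑ e ∈ A.filter (fun e => v ∈ e), pe Lt e c ≤ β) (v : V) (c : C) :
    1 - β ≤ qq A Lt v c ∧ qq A Lt v c ≤ 1 ∧ 0 < qq A Lt v c := by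
  have := prod_one_sub_bounds (A.filter (fun e => v ∈ e)) (fun e => pe Lt e c)
    (fun e _ => pe_nonneg _ _ _) (by linarith [hβ v c])
  have h2 := hβ v c
  unfold qq
  refine ⟨by linarith [this.1], this.2, by linarith [this.1]⟩

lemma wt_isW {A : Finset (Sym2 V)} {Lt : Sym2 V → Finset C} {β : ℝ} (hβ0 : 0 ≤ β) (hβ1 : β ≤ 1 / 2)
    (hL : ∀ e ∈ A, (Lt e).Nonempty)
    (hβ : ∀ v c, ∑ e ∈ A.filter (fun e => v ∈ e), pe Lt e c ≤ β) : IsW (wt A Lt (1 - β)) := by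
  have hd : ∀ v c, 0 ≤ (1 - β) / qq A Lt v c ∧ (1 - β) / qq A Lt v c ≤ 1 := by
    intro v c
    obtain ⟨h1, h2, h3⟩ := qq_bounds hβ1 hβ v c
    exact ⟨div_nonneg (by linarith) h3.le, (div_le_one h3).2 h1⟩
  constructor
  · rintro (e | ⟨v, c⟩) (_ | c')
    · simp only [wt]; split_ifs <;> norm_num
    · simp only [wt]; split_ifs
      · exact pe_nonneg _ _ _
      · exact le_refl _
    · simp only [wt]; exact (hd v c).1
    · simp only [wt]; split_ifs
      · linarith [(hd v c).2]
      · exact le_refl _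
  · rintro (e | ⟨v, c⟩)
    · rw [Fintype.sum_option]
      simp only [wt]
      by_cases he : e ∈ A
      · simp only [he, if_true, zero_add, pe]
        rw [Finset.sum_ite_mem, Finset.univ_inter, Finset.sum_const, nsmul_eq_mul,
          mul_inv_cancel₀]
        exact_mod_cast (Finset.card_pos.2 (hL e he)).ne'
      · simp [he]
    · rw [Fintype.sum_option]
      simp [wt]

lemma wt_H1 {A : Finset (Sym2 V)} {Lt : Sym2 V → Finset C} {β : ℝ} (hβ1 : β ≤ 1 / 2)
    (hβ : ∀ v c, ∑ e ∈ A.filter (fun e => v ∈ e), pe Lt e c ≤ β) (v : V) (c : C) :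
    ∏ i, (1 - if v ∈ ic A i then wt A Lt (1 - β) i (some c) else 0) = 1 - β := by
  obtain ⟨h1, h2, h3⟩ := qq_bounds hβ1 hβ v c
  rw [Fintype.prod_sum_type]
  have e1 : ∏ e : Sym2 V, (1 - if v ∈ ic (C := C) A (Sum.inl e) then
      wt A Lt (1 - β) (Sum.inl e) (some c) else 0) = qq A Lt v c := by
    unfold qq
    rw [← Finset.prod_subset (Finset.subset_univ (A.filter fun e => v ∈ e))]
    · apply Finset.prod_congr rfl
      intro e he
      rw [Finset.mem_filter] at he
      simp [ic, wt, he.1, he.2]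
    · intro e _ he
      rw [Finset.mem_filter] at he
      by_cases hA : e ∈ A
      · have : v ∉ e := fun h => he ⟨hA, h⟩
        simp [ic, hA, this]
      · simp [ic, hA]
  have e2 : ∏ i : V × C, (1 - if v ∈ ic (C := C) A (Sum.inr i) then
      wt A Lt (1 - β) (Sum.inr i) (some c) else 0) = (1 - β) / qq A Lt v c := by
    rw [Finset.prod_eq_single (v, c)]
    · simp [ic, wt]
    · rintro ⟨v', c'⟩ _ hne
      by_cases hv : v = v'
      · subst hv
        have : ¬ c = c' := fun h => hne (by rw [h])
        simp [ic, wt, this]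
      · simp [ic, hv]
    · simp
  rw [e1, e2]
  field_simp

lemma wt_H2 {A : Finset (Sym2 V)} {Lt : Sym2 V → Finset C} {β : ℝ} (hβ1 : β ≤ 1 / 2)
    (hβ : ∀ v c, ∑ e ∈ A.filter (fun e => v ∈ e), pe Lt e c ≤ β) (v : V) (c : C) :
    ∑ i, (if v ∈ ic A i then wt A Lt (1 - β) i (some c) else 0) ≤ 1 := by
  obtain ⟨h1, h2, h3⟩ := qq_bounds hβ1 hβ v c
  rw [Fintype.sum_sum_type]
  have e1 : ∑ e : Sym2 V, (if v ∈ ic (C := C) A (Sum.inl e) then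
      wt A Lt (1 - β) (Sum.inl e) (some c) else 0) = ∑ e ∈ A.filter (fun e => v ∈ e), pe Lt e c := by
    rw [← Finset.sum_subset (Finset.subset_univ (A.filter fun e => v ∈ e))]
    · apply Finset.sum_congr rfl
      intro e he
      rw [Finset.mem_filter] at he
      simp [ic, wt, he.1, he.2]
    · intro e _ he
      rw [Finset.mem_filter] at he
      by_cases hA : e ∈ A
      · have : v ∉ e := fun h => he ⟨hA, h⟩
        simp [ic, hA, this]
      · simp [ic, hA]
  have e2 : ∑ i : V × C, (if v ∈ ic (C := C) A (Sum.inr i) then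
      wt A Lt (1 - β) (Sum.inr i) (some c) else 0) = 1 - (1 - β) / qq A Lt v c := by
    rw [Finset.sum_eq_single (v, c)]
    · simp [ic, wt]
    · rintro ⟨v', c'⟩ _ hne
      by_cases hv : v = v'
      · subst hv
        have : ¬ c = c' := fun h => hne (by rw [h])
        simp [ic, wt, this]
      · simp [ic, hv]
    · simp
  rw [e1, e2]
  have : 1 - β ≤ (1 - β) / qq A Lt v c := by
    rw [le_div_iff₀ h3]
    nlinarith
  linarith [hβ v c]

lemma ic_card (A : Finset (Sym2 V)) (hA : ∀ e ∈ A, ¬ e.IsDiag) (i : Sym2 V ⊕ (V × C)) :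
    (ic A i).card ≤ 2 := by
  rcases i with e | ⟨v, c⟩
  · simp only [ic]
    split_ifs with h
    · induction e using Sym2.ind with
      | _ x y =>
        refine le_trans (Finset.card_le_card (t := {x, y}) ?_) Finset.card_le_two
        intro z
        simp
    · simp
  · simp [ic]

end RoundSpace


section Round
open scoped Classical
open Finset

variable {V C : Type} [Fintype V]

/-- Neighbours of a vertex. -/
noncomputable def nb (G : SimpleGraph V) (v : V) : Finset V := Finset.univ.filter (fun x => G.Adj v x)

/-- Closed neighbourhood. -/
noncomputable def cnb (G : SimpleGraph V) (v : V) : Finset V := insert v (nb G v)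

lemma mem_cnb (G : SimpleGraph V) (v x : V) : x ∈ cnb G v ↔ x = v ∨ G.Adj v x := by
  simp [cnb, nb]

lemma mem_nb (G : SimpleGraph V) (v x : V) : x ∈ nb G v ↔ G.Adj v x := by
  simp [nb]

lemma cnb3_card (G : SimpleGraph V) {D : ℕ} (hD : ∀ v, (nb G v).card ≤ D) (v : V) :
    ((cnb G v).biUnion fun w => (cnb G w).biUnion fun w' => cnb G w').card ≤ (D + 1) ^ 3 := by
  have h1 : ∀ v, (cnb G v).card ≤ D + 1 := fun v =>
    (Finset.card_insert_le _ _).trans (by have := hD v; omega)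
  have h2 : ∀ w, ((cnb G w).biUnion fun w' => cnb G w').card ≤ (D + 1) * (D + 1) := fun w =>
    (Finset.card_biUnion_le_card_mul _ _ _ fun w' _ => h1 w').trans
      (Nat.mul_le_mul_right _ (h1 w))
  refine (Finset.card_biUnion_le_card_mul _ _ _ fun w' _ => h2 w').trans ?_
  refine (Nat.mul_le_mul_right _ (h1 v)).trans ?_
  apply le_of_eq; ring

lemma edge_at (G : SimpleGraph V) {e : Sym2 V} (he : e ∈ G.edgeSet) {v : V} (hv : v ∈ e) :
    ∃ x, e = s(v, x) ∧ G.Adj v x := by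
  obtain ⟨x, rfl⟩ := Sym2.mem_iff_exists.1 hv
  exact ⟨x, rfl, he⟩

lemma edges_at_card (G : SimpleGraph V) (A : Finset (Sym2 V)) (hA : ∀ e ∈ A, e ∈ G.edgeSet) (v : V) :
    (A.filter fun e => v ∈ e).card ≤ (nb G v).card := by
  have : (A.filter fun e => v ∈ e) ⊆ (nb G v).image fun x => s(v, x) := by
    intro e he
    rw [mem_filter] at he
    obtain ⟨x, hx, hadj⟩ := edge_at G (hA e he.1) he.2
    rw [mem_image]
    exact ⟨x, by simpa [nb] using hadj, hx.symm⟩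
  exact (card_le_card this).trans card_image_le

lemma surv_congr {ι : Type} (inc : ι → Finset V) (v : V) (c : C) {ω ω' : ι → Option C}
    (h : ∀ i, v ∈ inc i → ω i = ω' i) : Surv inc v c ω ↔ Surv inc v c ω' := by
  unfold Surv
  constructor
  · intro hs i hi; rw [← h i hi]; exact hs i hi
  · intro hs i hi; rw [h i hi]; exact hs i hi

lemma mem_card_le_two (g : Sym2 V) : (Finset.univ.filter fun x => x ∈ g).card ≤ 2 := by
  induction g using Sym2.ind with
  | _ x y =>
    refine le_trans (Finset.card_le_card (t := {x, y}) ?_) Finset.card_le_two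
    intro z
    simp

variable [Fintype C]

/-- Existence of the random space of one round. -/
lemma exists_space (G : SimpleGraph V) {A : Finset (Sym2 V)} (hA : ∀ e ∈ A, e ∈ G.edgeSet)
    {Lt : Sym2 V → Finset C} {β : ℝ} (hβ0 : 0 ≤ β) (hβ1 : β ≤ 1 / 2)
    (hL : ∀ e ∈ A, (Lt e).Nonempty)
    (hβ : ∀ v c, ∑ e ∈ A.filter (fun e => v ∈ e), pe Lt e c ≤ β) :
    ∃ (ι : Type) (_ : Fintype ι) (em : Sym2 V ↪ ι) (p : ι → Option C → ℝ) (inc : ι → Finset V),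
      IsW p ∧ (∀ v c, ∏ i, (1 - if v ∈ inc i then p i (some c) else 0) = 1 - β) ∧
      (∀ v c, ∑ i, (if v ∈ inc i then p i (some c) else 0) ≤ 1) ∧ (∀ i, (inc i).card ≤ 2) ∧
      (∀ e ∈ A, ∀ x ∈ e, x ∈ inc (em e)) ∧
      (∀ i, ∀ w ∈ inc i, ∀ w' ∈ inc i, w' ∈ cnb G w) ∧
      (∀ e ∈ A, p (em e) none = 0 ∧ ∀ c, p (em e) (some c) = pe Lt e c) := by
  refine ⟨Sym2 V ⊕ (V × C), inferInstance, ⟨Sum.inl, Sum.inl_injective⟩, wt A Lt (1 - β), ic A,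
    wt_isW hβ0 hβ1 hL hβ, wt_H1 hβ1 hβ, wt_H2 hβ1 hβ,
    ic_card A (fun e he => G.not_isDiag_of_mem_edgeSet (hA e he)), ?_, ?_, ?_⟩
  · intro e he x hx
    simp [ic, he, hx]
  · intro i w hw w' hw'
    rcases i with e | ⟨z, c⟩
    · simp only [ic] at hw hw'
      split_ifs at hw hw' with he
      · simp only [mem_filter, mem_univ, true_and] at hw hw'
        obtain ⟨y, rfl, hadj⟩ := edge_at G (hA e he) hw
        rw [mem_cnb]
        rcases Sym2.mem_iff.1 hw' with rfl | rfl
        · left; rfl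
        · right; exact hadj
      · simp at hw
    · simp only [ic, mem_singleton] at hw hw'
      rw [hw, hw', mem_cnb]; left; rfl
  · intro e he
    simp [wt, he]

section
variable {ι : Type} (em : Sym2 V ↪ ι)

/-- Edge coordinates at `v`. -/
noncomputable def II (A : Finset (Sym2 V)) (v : V) : Finset ι :=
  (A.filter fun e => v ∈ e).map em

/-- Coordinates in conflict with an edge at `v`, not at `v`. -/
noncomputable def JJ (A : Finset (Sym2 V)) (v : V) (i : ι) : Finset ι :=
  (A.filter fun g => v ∉ g ∧ ∃ e, em e = i ∧ ∃ x ∈ e, x ∈ g).map em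

lemma mem_II {A : Finset (Sym2 V)} {v : V} {i : ι} :
    i ∈ II em A v ↔ ∃ e ∈ A, v ∈ e ∧ i = em e := by
  simp only [II, mem_map, mem_filter]
  constructor
  · rintro ⟨e, ⟨h1, h2⟩, rfl⟩; exact ⟨e, h1, h2, rfl⟩
  · rintro ⟨e, h1, h2, rfl⟩; exact ⟨e, ⟨h1, h2⟩, rfl⟩

lemma mem_JJ {A : Finset (Sym2 V)} {v : V} {e : Sym2 V} {i : ι} :
    i ∈ JJ em A v (em e) ↔ ∃ g ∈ A, v ∉ g ∧ (∃ x ∈ e, x ∈ g) ∧ i = em g := by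
  simp only [JJ, mem_map, mem_filter]
  constructor
  · rintro ⟨g, ⟨h1, h2, e', he', h3⟩, rfl⟩
    rw [em.injective he'] at h3
    exact ⟨g, h1, h2, h3, rfl⟩
  · rintro ⟨g, h1, h2, h3, rfl⟩; exact ⟨g, ⟨h1, h2, e, rfl, h3⟩, rfl⟩

lemma II_card (A : Finset (Sym2 V)) (v : V) : (II em A v).card = (A.filter fun e => v ∈ e).card :=
  card_map _

lemma wt_sum_le {A B : Finset (Sym2 V)} {Lt : Sym2 V → Finset C} {β : ℝ} (hβ0 : 0 ≤ β)
    (p : ι → Option C → ℝ) (hpe : ∀ e ∈ A, p (em e) none = 0 ∧ ∀ c, p (em e) (some c) = pe Lt e c)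
    (x : V) (hβ : ∀ c, ∑ e ∈ A.filter (fun e => x ∈ e), pe Lt e c ≤ β)
    (hB : B ⊆ A.filter (fun e => x ∈ e)) (y : Option C) :
    ∑ i ∈ B.map em, p i y ≤ β := by
  rw [sum_map]
  rcases y with _ | c
  · rw [sum_eq_zero]
    · exact hβ0
    · intro e he
      exact (hpe e (mem_filter.1 (hB he)).1).1
  · refine le_trans ?_ (hβ c)
    refine le_trans (le_of_eq ?_) (sum_le_sum_of_subset_of_nonneg hB fun e _ _ => pe_nonneg Lt e c)
    apply sum_congr rfl
    intro e he
    exact (hpe e (mem_filter.1 (hB he)).1).2 c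

end

set_option maxHeartbeats 1000000 in
theorem colour_round [Nonempty C] (G : SimpleGraph V) (A : Finset (Sym2 V)) (hA : ∀ e ∈ A, e ∈ G.edgeSet)
    (Lt : Sym2 V → Finset C) (χ : Sym2 V → ℕ) (k D : ℕ) (β δ N0 : ℝ)
    (hβ0 : 0 ≤ β) (hβ1 : β ≤ 1 / 2) (hδ : 0 < δ) (hδ1 : δ ≤ 1)
    (hne : ∀ e ∈ A, (Lt e).Nonempty)
    (hβ : ∀ v c, ∑ e ∈ A.filter (fun e => v ∈ e), pe Lt e c ≤ β)
    (hN : ∀ v, N0 ≤ (nb G v).card) (hNL : ∀ e ∈ G.edgeSet, N0 ≤ (Lt e).card)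
    (hD : ∀ v, (nb G v).card ≤ D) (hDL : ∀ e ∈ G.edgeSet, (Lt e).card ≤ 3 * D)
    (hq : 4 * (((D : ℝ) + k * (D * (3 * D)) + 2) * Real.exp (-(δ ^ 2 * N0 / 32))) * ((D : ℝ) + 1) ^ 3 ≤ 1) :
    ∃ (col : Sym2 V → C) (K : V → Finset C),
      (∀ e ∈ A, col e ∈ Lt e ∧ ∀ v ∈ e, col e ∈ K v) ∧
      (∀ e ∈ G.edgeSet, ((1 - β) ^ 2 - δ) * (Lt e).card ≤
        (((Lt e).filter fun c => ∀ w ∈ e, c ∉ K w).card : ℝ)) ∧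
      (∀ v c, ∀ j < k, ((((nb G v).filter fun x => χ s(v, x) = j ∧ c ∈ Lt s(v, x) ∧ c ∉ K x).card : ℝ)) ≤
        (1 - β) * (((nb G v).filter fun x => χ s(v, x) = j ∧ c ∈ Lt s(v, x)).card : ℝ)
          + δ * (nb G v).card) ∧
      (∀ v, ((A.filter fun e => v ∈ e ∧ ∃ g ∈ A, g ≠ e ∧ (∃ w, w ∈ e ∧ w ∈ g) ∧ col g = col e).card : ℝ) ≤
        2 * β * (A.filter fun e => v ∈ e).card + 2 * δ * (nb G v).card) := by
  obtain ⟨ι, hι, em, p, inc, hp, H1, H2, hinc, hic, hcn, hpe⟩ := exists_space G hA hβ0 hβ1 hne hβ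
  let BL : V → V → (ι → Option C) → Prop := fun v x ω =>
    (((Lt s(v, x)).filter fun c => Surv inc v c ω ∧ Surv inc x c ω).card : ℝ) <
      ((1 - β) ^ 2 - δ) * (Lt s(v, x)).card
  let TT : V → ℕ → C → Finset V := fun v j c =>
    (nb G v).filter fun x => χ s(v, x) = j ∧ c ∈ Lt s(v, x)
  let BT : V → ℕ × C → (ι → Option C) → Prop := fun v jc ω =>
    (1 - β) * (TT v jc.1 jc.2).card + δ * (nb G v).card <
      (((TT v jc.1 jc.2).filter fun x => Surv inc x jc.2 ω).card : ℝ)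
  let B1 : V → (ι → Option C) → Prop := fun v ω =>
    β * (II em A v).card + δ * (nb G v).card <
      (((II em A v).filter fun i => ∃ j ∈ II em A v, j ≠ i ∧ ω j = ω i).card : ℝ)
  let B2 : V → (ι → Option C) → Prop := fun v ω =>
    β * (II em A v).card + δ * (nb G v).card <
      (((II em A v).filter fun i => ∃ j ∈ JJ em A v i, ω j = ω i).card : ℝ)
  let Q : V → Finset (ℕ × C) := fun v => range k ×ˢ (nb G v).biUnion fun x => Lt s(v, x)
  let B : V → (ι → Option C) → Prop := fun v ω =>
    (∃ x ∈ nb G v, BL v x ω) ∨ (∃ jc ∈ Q v, BT v jc ω) ∨ B1 v ω ∨ B2 v ω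
  let S : V → Finset ι := fun v =>
    univ.filter fun i => ∃ w ∈ inc i, w ∈ cnb G v
  have hIS : ∀ v, ∀ i ∈ II em A v, i ∈ S v := by
    intro v i hi
    obtain ⟨e, he, hv, rfl⟩ := (mem_II em).1 hi
    simp only [S, mem_filter, mem_univ, true_and]
    exact ⟨v, hic e he v hv, by simp [mem_cnb]⟩
  have hJS : ∀ v, ∀ i ∈ II em A v, ∀ j ∈ JJ em A v i, j ∈ S v := by
    intro v i hi j hj
    obtain ⟨e, he, hv, rfl⟩ := (mem_II em).1 hi
    obtain ⟨g, hg, hvg, ⟨x, hxe, hxg⟩, rfl⟩ := (mem_JJ em).1 hj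
    simp only [S, mem_filter, mem_univ, true_and]
    refine ⟨x, hic g hg x hxg, ?_⟩
    obtain ⟨y, rfl, hadj⟩ := edge_at G (hA e he) hv
    rw [mem_cnb]
    rcases Sym2.mem_iff.1 hxe with rfl | rfl
    · left; rfl
    · right; exact hadj
  have hloc : ∀ v a a', (∀ i, i ∈ S v → a i = a' i) → (B v a ↔ B v a') := by
    intro v a a' h
    have hsv : ∀ x ∈ cnb G v, ∀ c, Surv inc x c a ↔ Surv inc x c a' := by
      intro x hx c
      apply surv_congr
      intro i hi
      apply h
      simp only [S, mem_filter, mem_univ, true_and]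
      exact ⟨x, hi, hx⟩
    have hv : v ∈ cnb G v := by simp [mem_cnb]
    have hx : ∀ x ∈ nb G v, x ∈ cnb G v := fun x hx => mem_insert_of_mem hx
    have e1 : ∀ x ∈ nb G v, (BL v x a ↔ BL v x a') := by
      intro x hxx
      have : ((Lt s(v, x)).filter fun c => Surv inc v c a ∧ Surv inc x c a) =
          ((Lt s(v, x)).filter fun c => Surv inc v c a' ∧ Surv inc x c a') :=
        filter_congr fun c _ => by rw [hsv v hv c, hsv x (hx x hxx) c]
      simp only [BL]
      rw [this]
    have e2 : ∀ jc, BT v jc a ↔ BT v jc a' := by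
      intro jc
      have : ((TT v jc.1 jc.2).filter fun x => Surv inc x jc.2 a) =
          ((TT v jc.1 jc.2).filter fun x => Surv inc x jc.2 a') :=
        filter_congr fun x hxx => hsv x (hx x (mem_filter.1 hxx).1) _
      simp only [BT]
      rw [this]
    have e3 : B1 v a ↔ B1 v a' := by
      have : ((II em A v).filter fun i => ∃ j ∈ II em A v, j ≠ i ∧ a j = a i) =
          ((II em A v).filter fun i => ∃ j ∈ II em A v, j ≠ i ∧ a' j = a' i) := by
        apply filter_congr
        intro i hi
        refine exists_congr fun j => and_congr_right fun hj => ?_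
        rw [h i (hIS v i hi), h j (hIS v j hj)]
      simp only [B1]
      rw [this]
    have e4 : B2 v a ↔ B2 v a' := by
      have : ((II em A v).filter fun i => ∃ j ∈ JJ em A v i, a j = a i) =
          ((II em A v).filter fun i => ∃ j ∈ JJ em A v i, a' j = a' i) := by
        apply filter_congr
        intro i hi
        refine exists_congr fun j => and_congr_right fun hj => ?_
        rw [h i (hIS v i hi), h j (hJS v i hi j hj)]
      simp only [B2]
      rw [this]
    simp only [B]
    rw [e3, e4]
    have e1' : (∃ x ∈ nb G v, BL v x a) ↔ (∃ x ∈ nb G v, BL v x a') :=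
      exists_congr fun x => and_congr_right fun hx => e1 x hx
    have e2' : (∃ jc ∈ Q v, BT v jc a) ↔ (∃ jc ∈ Q v, BT v jc a') :=
      exists_congr fun x => and_congr_right fun hx => e2 x
    rw [e1', e2']
  have hIN : ∀ v, ((II em A v).card : ℝ) ≤ (nb G v).card := by
    intro v
    rw [II_card]
    exact_mod_cast edges_at_card G A hA v
  set b := Real.exp (-(δ ^ 2 * N0 / 32)) with hb
  have hb0 : 0 ≤ b := (Real.exp_pos _).le
  have hbm : ∀ M : ℝ, N0 ≤ M → Real.exp (-(δ ^ 2 * M / 32)) ≤ b := by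
    intro M hM
    apply Real.exp_le_exp.2
    have : δ ^ 2 * N0 ≤ δ ^ 2 * M := mul_le_mul_of_nonneg_left hM (sq_nonneg _)
    linarith
  have hPB : ∀ v, PP p (B v) ≤ ((D : ℝ) + k * (D * (3 * D)) + 2) * b := by
    intro v
    have hDv : ((nb G v).card : ℝ) ≤ D := by exact_mod_cast hD v
    have p1 : PP p (fun ω => ∃ x ∈ nb G v, BL v x ω) ≤ (nb G v).card * b := by
      apply PP_exists_le hp
      intro x hx
      refine le_trans (evL hp inc H1 H2 v x (Lt s(v, x)) hδ hδ1) (hbm _ ?_)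
      exact hNL _ (by simpa [nb] using hx)
    have p2 : PP p (fun ω => ∃ jc ∈ Q v, BT v jc ω) ≤ (Q v).card * b := by
      apply PP_exists_le hp
      intro jc _
      refine le_trans (evT hp inc hinc H1 H2 (TT v jc.1 jc.2) jc.2 (N := (nb G v).card) ?_ hδ hδ1)
        (hbm _ (hN v))
      exact_mod_cast card_le_card (filter_subset _ _)
    have p3 : PP p (B1 v) ≤ b := by
      have hev := evN1 hp (II em A v) (hIN v) (β := β) (δ := δ) ?_ hδ hδ1
      · refine (PP_mono hp ?_).trans (hev.trans (hbm _ (hN v)))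
        intro ω h
        simp only [B1] at h
        convert h
      intro y
      exact wt_sum_le em hβ0 p hpe v (hβ v) (subset_refl _) y
    have p4 : PP p (B2 v) ≤ b := by
      have hev := evN2 hp (II em A v) (JJ em A v) (hIN v) (β := β) (δ := δ) ?_ ?_ (by linarith) ?_ hδ hδ1
      · refine (PP_mono hp ?_).trans (hev.trans (hbm _ (hN v)))
        intro ω h
        simp only [B2] at h
        convert h
      · intro i hi j hj hjI
        obtain ⟨e, he, hv, rfl⟩ := (mem_II em).1 hi
        obtain ⟨g, hg, hvg, _, rfl⟩ := (mem_JJ em).1 hj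
        obtain ⟨g', _, hvg', hh⟩ := (mem_II em).1 hjI
        rw [em.injective hh] at hvg
        exact hvg hvg'
      · intro i hi y
        obtain ⟨e, he, hv, rfl⟩ := (mem_II em).1 hi
        obtain ⟨x, rfl, hadj⟩ := edge_at G (hA e he) hv
        refine wt_sum_le em hβ0 p hpe x (hβ x) ?_ y
        intro g hg
        rw [mem_filter] at hg ⊢
        obtain ⟨hgA, hvg, e', he', z, hz, hzg⟩ := hg
        rw [em.injective he'] at hz
        refine ⟨hgA, ?_⟩
        rcases Sym2.mem_iff.1 hz with rfl | rfl
        · exact absurd hzg hvg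
        · exact hzg
      · intro j
        by_cases hj : ∃ g, em g = j
        · obtain ⟨g, rfl⟩ := hj
          have : ((II em A v).filter fun i => em g ∈ JJ em A v i) ⊆
              (univ.filter fun x => x ∈ g).image fun x => em s(v, x) := by
            intro i hi
            rw [mem_filter] at hi
            obtain ⟨hi, hj⟩ := hi
            obtain ⟨e, he, hv, rfl⟩ := (mem_II em).1 hi
            obtain ⟨x, rfl, hadj⟩ := edge_at G (hA e he) hv
            obtain ⟨g', hg, hvg, ⟨z, hz, hzg⟩, hh⟩ := (mem_JJ em).1 hj
            rw [← em.injective hh] at hzg hvg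
            rw [mem_image]
            refine ⟨x, ?_, rfl⟩
            rcases Sym2.mem_iff.1 hz with rfl | rfl
            · exact absurd hzg hvg
            · simpa using hzg
          exact (card_le_card this).trans (card_image_le.trans (mem_card_le_two g))
        · rw [filter_eq_empty_iff.2]
          · simp
          · intro i hi hjj
            obtain ⟨e, he, hv, rfl⟩ := (mem_II em).1 hi
            obtain ⟨g', hg, hvg, _, hh⟩ := (mem_JJ em).1 hjj
            exact hj ⟨g', hh.symm⟩
    have hQ : ((Q v).card : ℝ) ≤ k * (D * (3 * D)) := by
      have : (Q v).card ≤ k * (D * (3 * D)) := by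
        simp only [Q]
        rw [card_product, card_range]
        apply Nat.mul_le_mul_left
        refine (card_biUnion_le_card_mul _ _ (3 * D) fun x hx => ?_).trans
          (Nat.mul_le_mul_right _ (hD v))
        exact hDL _ (by simpa [nb] using hx)
      exact_mod_cast this
    have q1 := PP_or hp (fun ω => ∃ x ∈ nb G v, BL v x ω)
      (fun ω => (∃ jc ∈ Q v, BT v jc ω) ∨ B1 v ω ∨ B2 v ω)
    have q2 := PP_or hp (fun ω => ∃ jc ∈ Q v, BT v jc ω) (fun ω => B1 v ω ∨ B2 v ω)
    have q3 := PP_or hp (B1 v) (B2 v)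
    have r1 := mul_le_mul_of_nonneg_right hDv hb0
    have r2 := mul_le_mul_of_nonneg_right hQ hb0
    have : PP p (B v) ≤ (nb G v).card * b + ((Q v).card * b + (b + b)) := by
      refine q1.trans (add_le_add p1 (q2.trans (add_le_add p2 (q3.trans (add_le_add p3 p4)))))
    linarith
  have hdep : ∀ v, ((univ.filter fun u => ¬ Disjoint (S v) (S u)).card : ℝ) ≤ ((D : ℝ) + 1) ^ 3 := by
    intro v
    have : (univ.filter fun u => ¬ Disjoint (S v) (S u)) ⊆
        ((cnb G v).biUnion fun w => (cnb G w).biUnion fun w' => cnb G w') := by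
      intro u hu
      rw [mem_filter, not_disjoint_iff] at hu
      obtain ⟨_, i, hi1, hi2⟩ := hu
      simp only [S, mem_filter, mem_univ, true_and] at hi1 hi2
      obtain ⟨w, hw, hwv⟩ := hi1
      obtain ⟨w', hw', hwu⟩ := hi2
      simp only [mem_biUnion]
      refine ⟨w, hwv, w', ?_, ?_⟩
      · exact hcn i w hw w' hw'
      · rw [mem_cnb] at hwu ⊢
        rcases hwu with rfl | h
        · left; rfl
        · right; exact h.symm
    have := (card_le_card this).trans (cnb3_card G hD v)
    exact_mod_cast this
  obtain ⟨ω, hω0, hω⟩ := lll hp B S hloc (((D : ℝ) + k * (D * (3 * D)) + 2) * b) (((D : ℝ) + 1) ^ 3) hPB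
    (one_le_pow₀ (by have : (0:ℝ) ≤ D := Nat.cast_nonneg D
                     linarith)) hdep hq
  have hcol : ∀ e ∈ A, ∃ c ∈ Lt e, ω (em e) = some c := by
    intro e he
    have h := hω0 (em e)
    rcases hc : ω (em e) with _ | c
    · rw [hc] at h
      exact absurd (hpe e he).1 h
    · refine ⟨c, ?_, rfl⟩
      rw [hc] at h
      by_contra hcl
      rw [(hpe e he).2] at h; simp [pe, hcl] at h
  let col : Sym2 V → C := fun e => (ω (em e)).elim (Classical.arbitrary C) id
  have hcol' : ∀ e ∈ A, col e ∈ Lt e ∧ ω (em e) = some (col e) := by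
    intro e he
    obtain ⟨c, hc, h⟩ := hcol e he
    have : col e = c := by simp [col, h]
    rw [this]; exact ⟨hc, h⟩
  let K : V → Finset C := fun v => univ.filter fun c => ¬ Surv inc v c ω
  have hK : ∀ v c, c ∉ K v ↔ Surv inc v c ω := by
    intro v c; simp [K]
  refine ⟨col, K, ?_, ?_, ?_, ?_⟩
  · intro e he
    refine ⟨(hcol' e he).1, fun v hv => ?_⟩
    by_contra hcon
    rw [hK] at hcon
    exact hcon (em e) (hic e he v hv) (hcol' e he).2
  · intro e he
    induction e using Sym2.ind with
    | _ v x =>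
      have hadj : G.Adj v x := he
      have := hω v
      simp only [B, not_or, not_exists, not_and] at this
      have h1 := this.1 x (by simpa [nb] using hadj)
      simp only [BL, not_lt] at h1
      refine h1.trans (le_of_eq ?_)
      congr 2
      apply filter_congr
      intro c _
      constructor
      · rintro ⟨h1, h2⟩ w hw
        rw [hK]
        rcases Sym2.mem_iff.1 hw with rfl | rfl <;> assumption
      · intro h
        exact ⟨(hK _ _).1 (h v (Sym2.mem_mk_left _ _)), (hK _ _).1 (h x (Sym2.mem_mk_right _ _))⟩
  · intro v c j hj
    have := hω v
    simp only [B, not_or, not_exists, not_and] at this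
    have hset : ((nb G v).filter fun x => χ s(v, x) = j ∧ c ∈ Lt s(v, x) ∧ c ∉ K x) =
        (TT v j c).filter fun x => Surv inc x c ω := by
      simp only [TT]
      rw [filter_filter]
      apply filter_congr
      intro x _
      rw [hK, and_assoc]
    rw [hset]
    by_cases hc : c ∈ (nb G v).biUnion fun x => Lt s(v, x)
    · have h1 := this.2.1 (j, c) (by simp only [Q, mem_product, mem_range]; exact ⟨hj, hc⟩)
      simp only [BT, not_lt] at h1
      exact h1
    · have he : TT v j c = ∅ := by
        simp only [TT]
        rw [filter_eq_empty_iff]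
        rintro x hx ⟨_, hcx⟩
        exact hc (mem_biUnion.2 ⟨x, hx, hcx⟩)
      have e2 : ((nb G v).filter fun x => χ s(v, x) = j ∧ c ∈ Lt s(v, x)) = ∅ := he
      rw [he, e2]
      simp only [filter_empty, card_empty, Nat.cast_zero, mul_zero, zero_add]
      positivity
  · intro v
    have := hω v
    simp only [B, not_or, not_exists, not_and] at this
    have h1 := this.2.2.1
    have h2 := this.2.2.2
    simp only [B1, B2, not_lt] at h1 h2
    rw [II_card] at h1 h2
    have hsub : (A.filter fun e => v ∈ e ∧ ∃ g ∈ A, g ≠ e ∧ (∃ w, w ∈ e ∧ w ∈ g) ∧ col g = col e).map em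
        ⊆ ((II em A v).filter fun i => ∃ j ∈ II em A v, j ≠ i ∧ ω j = ω i) ∪
          ((II em A v).filter fun i => ∃ j ∈ JJ em A v i, ω j = ω i) := by
      intro i hi
      rw [mem_map] at hi
      obtain ⟨e, he, rfl⟩ := hi
      rw [mem_filter] at he
      obtain ⟨heA, hve, g, hgA, hge, ⟨w, hwe, hwg⟩, hcg⟩ := he
      have hωe : ω (em g) = ω (em e) := by
        rw [(hcol' g hgA).2, (hcol' e heA).2, hcg]
      rw [mem_union, mem_filter, mem_filter]
      by_cases hvg : v ∈ g
      · left
        refine ⟨(mem_II em).2 ⟨e, heA, hve, rfl⟩, em g, (mem_II em).2 ⟨g, hgA, hvg, rfl⟩, ?_, hωe⟩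
        intro h; exact hge (em.injective h)
      · right
        refine ⟨(mem_II em).2 ⟨e, heA, hve, rfl⟩, em g, (mem_JJ em).2 ⟨g, hgA, hvg, ⟨w, hwe, hwg⟩, rfl⟩, hωe⟩
    have h3 := (card_le_card hsub).trans (card_union_le _ _)
    rw [card_map] at h3
    have h4 : ((A.filter fun e => v ∈ e ∧ ∃ g ∈ A, g ≠ e ∧ (∃ w, w ∈ e ∧ w ∈ g) ∧ col g = col e).card : ℝ) ≤
        ((II em A v).filter fun i => ∃ j ∈ II em A v, j ≠ i ∧ ω j = ω i).card +
          ((II em A v).filter fun i => ∃ j ∈ JJ em A v i, ω j = ω i).card := by exact_mod_cast h3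
    linarith

end Round


section Split
open scoped Classical
open Finset

lemma evS {ι α : Type} [Fintype ι] [Fintype α] {p : ι → α → ℝ} (hp : IsW p) (I : Finset ι) (y : α)
    {c δ : ℝ} (hc : ∀ i, p i y ≤ c) (hδ : 0 < δ) (hδ1 : δ ≤ 1) :
    PP p (fun ω => c * I.card + δ * I.card < ((I.filter fun i => ω i = y).card : ℝ)) ≤
      Real.exp (-(δ ^ 2 * I.card / 32)) := by
  have hple : ∀ i y, p i y ≤ 1 := by
    intro i y
    rw [← hp.2 i]
    exact Finset.single_le_sum (f := p i) (fun z _ => hp.1 i z) (Finset.mem_univ y)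
  apply conc' hp _ (fun i z => if i ∈ I ∧ z = y then 1 else 0) _ _ _ _ hδ hδ1
  · rw [EE_card I (fun i ω => ω i = y)]
    have : ∀ i ∈ I, PP p (fun ω => ω i = y) ≤ c := fun i _ => by
      rw [PP_coord hp]; exact hc i
    refine (sum_le_sum this).trans (le_of_eq ?_)
    simp [mul_comm]
  · intro i y
    try dsimp only
    split_ifs <;> norm_num
  · intro i y
    try dsimp only
    split_ifs <;> norm_num
  · intro i ω ω' h
    have hsub : (I.filter fun j => ω j = y) ⊆ (I.filter fun j => ω' j = y) ∪
        (if i ∈ I ∧ ω i = y then {i} else ∅) := by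
      intro j hj
      rw [mem_filter] at hj
      rw [mem_union, mem_filter]
      by_cases hji : j = i
      · subst hji; right; rw [if_pos hj]; simp
      · left; rw [← h j hji]; exact hj
    have h1 := (card_le_card hsub).trans (card_union_le _ _)
    have h2 : (((if i ∈ I ∧ ω i = y then {i} else ∅ : Finset ι).card : ℕ) : ℝ) =
        if i ∈ I ∧ ω i = y then 1 else 0 := by
      split_ifs <;> simp
    have h3 : ((I.filter fun j => ω j = y).card : ℝ) ≤ (I.filter fun j => ω' j = y).card +
      ((if i ∈ I ∧ ω i = y then {i} else ∅ : Finset ι).card : ℕ) := by exact_mod_cast h1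
    have h4 : (0:ℝ) ≤ if i ∈ I ∧ ω' i = y then 1 else 0 := by split_ifs <;> norm_num
    linarith
  · have : ∀ i, ∑ z, p i z * (if i ∈ I ∧ z = y then (1:ℝ) else 0) ^ 2 ≤ if i ∈ I then 1 else 0 := by
      intro i
      by_cases hi : i ∈ I
      · simp [hi, hple]
      · simp [hi]
    refine (sum_le_sum fun i _ => this i).trans ?_
    simp only [sum_ite_mem, univ_inter, sum_const, nsmul_eq_mul, mul_one]
    have : (0:ℝ) ≤ I.card := Nat.cast_nonneg _
    linarith

variable {V : Type} [Fintype V]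

lemma batch_split (G : SimpleGraph V) (k D : ℕ) (δ N0 : ℝ) (hk : 0 < k) (hδ : 0 < δ) (hδ1 : δ ≤ 1)
    (hN : ∀ v, N0 ≤ (nb G v).card) (hD : ∀ v, (nb G v).card ≤ D)
    (hq : 4 * (k * Real.exp (-(δ ^ 2 * N0 / 32))) * ((D : ℝ) + 1) ≤ 1) :
    ∃ χ : Sym2 V → ℕ, (∀ e, χ e < k) ∧ ∀ v, ∀ j < k,
      (((nb G v).filter fun x => χ s(v, x) = j).card : ℝ) ≤ (1 / k + δ) * (nb G v).card := by
  have hkR : (0:ℝ) < k := by exact_mod_cast hk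
  obtain ⟨ι, hι, ⟨em⟩⟩ : ∃ (ι : Type) (_ : Fintype ι), Nonempty (Sym2 V ↪ ι) :=
    ⟨Sym2 V, inferInstance, ⟨Function.Embedding.refl _⟩⟩
  let p : ι → Fin k → ℝ := fun _ _ => 1 / k
  have hp : IsW p := by
    refine ⟨fun _ _ => by positivity, fun _ => ?_⟩
    simp only [p, sum_const, card_univ, Fintype.card_fin, nsmul_eq_mul]
    field_simp
  let f : V → V ↪ ι := fun v => ⟨fun x => em s(v, x), fun x y h => by
    have := em.injective h
    rcases Sym2.eq_iff.1 this with h | h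
    · exact h.2
    · exact h.2.trans h.1⟩
  let I : V → Finset ι := fun v => (nb G v).map (f v)
  let B : V → (ι → Fin k) → Prop := fun v ω => ∃ j ∈ (univ : Finset (Fin k)),
    1 / k * (I v).card + δ * (I v).card < (((I v).filter fun i => ω i = j).card : ℝ)
  have hI : ∀ v, (I v).card = (nb G v).card := fun v => card_map _
  set b := Real.exp (-(δ ^ 2 * N0 / 32)) with hb
  have g1 : ∀ v a a', (∀ i, i ∈ I v → a i = a' i) → (B v a ↔ B v a') := by
    intro v a a' h
    simp only [B]
    have : ∀ j, ((I v).filter fun i => a i = j) = ((I v).filter fun i => a' i = j) := fun j =>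
      filter_congr fun i hi => by rw [h i hi]
    simp only [this]
  have g2 : ∀ v, PP p (B v) ≤ k * b := by
    intro v
    have h1 := PP_exists_le hp (univ : Finset (Fin k)) (fun j ω =>
      1 / k * (I v).card + δ * (I v).card < (((I v).filter fun i => ω i = j).card : ℝ)) b (by
        intro j _
        have h2 := evS hp (I v) j (c := 1 / k) (fun i => le_refl _) hδ hδ1
        refine (PP_mono hp ?_).trans (h2.trans ?_)
        · intro ω h; convert h
        · apply Real.exp_le_exp.2
          rw [hI]
          have : δ ^ 2 * N0 ≤ δ ^ 2 * (nb G v).card := mul_le_mul_of_nonneg_left (hN v) (sq_nonneg _)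
          linarith)
    rw [card_univ, Fintype.card_fin] at h1
    exact h1
  have g3 : (1:ℝ) ≤ D + 1 := by
    have : (0:ℝ) ≤ D := Nat.cast_nonneg D
    linarith
  have g4 : ∀ v, ((univ.filter fun u => ¬ Disjoint (I v) (I u)).card : ℝ) ≤ D + 1 := by
    intro v
    have : (univ.filter fun u => ¬ Disjoint (I v) (I u)) ⊆ cnb G v := by
      intro u hu
      rw [mem_filter, not_disjoint_iff] at hu
      obtain ⟨_, i, hi1, hi2⟩ := hu
      simp only [I, mem_map] at hi1 hi2
      obtain ⟨x, hx, rfl⟩ := hi1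
      obtain ⟨y, hy, h⟩ := hi2
      have h1 := em.injective h
      rw [mem_cnb]
      rw [mem_nb] at hx
      have hu : u ∈ s(v, x) := h1 ▸ Sym2.mem_mk_left u y
      rcases Sym2.mem_iff.1 hu with rfl | rfl
      · left; rfl
      · right; exact hx
    have := (card_le_card this).trans ((card_insert_le _ _).trans (Nat.add_le_add_right (hD v) 1))
    exact_mod_cast this
  obtain ⟨ω, _, hω⟩ := lll hp B I g1 (k * b) (D + 1) g2 g3 g4 hq
  refine ⟨fun e => (ω (em e)).1, fun e => (ω (em e)).2, ?_⟩
  intro v j hj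
  have h := hω v
  simp only [B, not_exists, not_and, not_lt] at h
  have h1 := h ⟨j, hj⟩ (mem_univ _)
  rw [hI] at h1
  rw [add_mul]
  refine le_trans ?_ h1
  simp only [I]
  rw [filter_map, card_map]
  apply le_of_eq
  congr 2
  apply filter_congr
  intro x _
  simp [f, Fin.ext_iff]
  rfl

end Split

section Greedy
open scoped Classical
open Finset

/-- Greedy completion: colour the edges of `F` one at a time. -/
lemma greedy {E C : Type} (adj : E → E → Prop) (hs : ∀ e f, adj e f → adj f e) (c0 : C)
    (Ls : E → Finset C) (F : Finset E)
    (h : ∀ e ∈ F, (F.filter fun f => adj e f).card < (Ls e).card) :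
    ∃ γ : E → C, (∀ e ∈ F, γ e ∈ Ls e) ∧ ∀ e ∈ F, ∀ f ∈ F, e ≠ f → adj e f → γ e ≠ γ f := by
  induction F using Finset.induction_on with
  | empty => exact ⟨fun _ => c0, by simp, by simp⟩
  | insert a F ha ih =>
    obtain ⟨γ, h1, h2⟩ := ih (fun e he => lt_of_le_of_lt
      (card_le_card (filter_subset_filter _ (subset_insert a F))) (h e (mem_insert_of_mem he)))
    have hc : ((F.filter fun f => adj a f).image γ).card < (Ls a).card :=
      lt_of_le_of_lt (card_image_le.trans
        (card_le_card (filter_subset_filter _ (subset_insert a F)))) (h a (mem_insert_self _ _))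
    obtain ⟨c, hcL, hcn⟩ := exists_mem_notMem_of_card_lt_card hc
    have hcn' : ∀ f ∈ F, adj a f → γ f ≠ c := by
      intro f hf hadj he
      exact hcn (mem_image.2 ⟨f, mem_filter.2 ⟨hf, hadj⟩, he⟩)
    have hne : ∀ f ∈ F, f ≠ a := fun f hf h => ha (h ▸ hf)
    refine ⟨Function.update γ a c, ?_, ?_⟩
    · intro e he
      rcases mem_insert.1 he with rfl | he
      · simpa using hcL
      · rw [Function.update_of_ne (hne e he)]; exact h1 e he
    · intro e he f hf hef hadj
      rcases mem_insert.1 he with rfl | he'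
      · rcases mem_insert.1 hf with rfl | hf
        · exact absurd rfl hef
        · rw [Function.update_self, Function.update_of_ne (hne f hf)]
          exact (hcn' f hf hadj).symm
      · rcases mem_insert.1 hf with rfl | hf
        · rw [Function.update_self, Function.update_of_ne (hne e he')]
          exact hcn' e he' (hs _ _ hadj)
        · rw [Function.update_of_ne (hne e he'), Function.update_of_ne (hne f hf)]
          exact h2 e he' f hf hef hadj

end Greedy


section Iter
open scoped Classical
open Finset

variable {V C : Type} [Fintype V] [Fintype C]

/-- Current lists. -/
noncomputable def Lst (L : Sym2 V → Finset C) (Al : V → Finset C) (e : Sym2 V) : Finset C :=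
  (L e).filter fun c => ∀ v ∈ e, c ∈ Al v

/-- The invariant of the iterative colouring. -/
structure ColInv (G : SimpleGraph V) (L : Sym2 V → Finset C) (χ : Sym2 V → ℕ) (k t : ℕ) (a b φ : ℝ)
    (Al : V → Finset C) (F : Finset (Sym2 V)) (γ : Sym2 V → C) : Prop where
  lists : ∀ e ∈ G.edgeSet, ∀ v ∈ e, a * (nb G v).card ≤ ((Lst L Al e).card : ℝ)
  cdeg : ∀ v c j, t ≤ j → j < k →
    (((nb G v).filter fun x => χ s(v, x) = j ∧ c ∈ Lst L Al s(v, x)).card : ℝ) ≤ b * (nb G v).card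
  mem : ∀ e ∈ G.edgeSet, χ e < t → e ∉ F → γ e ∈ L e ∧ ∀ v ∈ e, γ e ∉ Al v
  proper : ∀ e ∈ G.edgeSet, ∀ f ∈ G.edgeSet, χ e < t → χ f < t → e ∉ F → f ∉ F → e ≠ f →
    (∃ v, v ∈ e ∧ v ∈ f) → γ e ≠ γ f
  sub : ∀ e ∈ F, e ∈ G.edgeSet
  fdeg : ∀ v, ((F.filter fun e => v ∈ e).card : ℝ) ≤ φ * (nb G v).card

lemma filter_at (G : SimpleGraph V) (P : Sym2 V → Prop) (v : V) :
    (univ.filter fun e => (e ∈ G.edgeSet ∧ P e)).filter (fun e => v ∈ e) =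
      ((nb G v).filter fun x => P s(v, x)).image fun x => s(v, x) := by
  ext e
  simp only [mem_filter, mem_univ, true_and, mem_image, mem_nb]
  constructor
  · rintro ⟨⟨he, hP⟩, hv⟩
    obtain ⟨x, rfl, hadj⟩ := edge_at G he hv
    exact ⟨x, ⟨hadj, hP⟩, rfl⟩
  · rintro ⟨x, ⟨hadj, hP⟩, rfl⟩
    exact ⟨⟨hadj, hP⟩, Sym2.mem_mk_left _ _⟩

lemma mk_inj (v : V) : Function.Injective fun x : V => s(v, x) := by
  intro x y h
  rcases Sym2.eq_iff.1 h with h | h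
  · exact h.2
  · exact h.2.trans h.1

lemma inv_step [Nonempty C] (G : SimpleGraph V) (L : Sym2 V → Finset C) (χ : Sym2 V → ℕ)
    (k D t : ℕ) (ht : t < k) {a b φ a' b' φ' β δ ρ N0 : ℝ} {Al : V → Finset C} {F : Finset (Sym2 V)}
    {γ : Sym2 V → C} (h : ColInv G L χ k t a b φ Al F γ)
    (ha : 0 < a) (hβ0 : 0 ≤ β) (hβ1 : β ≤ 1 / 2) (hδ : 0 < δ) (hδ1 : δ ≤ 1) (hab : b ≤ β * a)
    (hpos : 0 ≤ (1 - β) ^ 2 - δ)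
    (hρ : ∀ v, (((nb G v).filter fun x => χ s(v, x) = t).card : ℝ) ≤ ρ * (nb G v).card)
    (ha' : a' ≤ ((1 - β) ^ 2 - δ) * a) (hb' : (1 - β) * b + δ ≤ b')
    (hφ' : φ + 2 * β * ρ + 2 * δ ≤ φ')
    (hN : ∀ v, N0 ≤ (nb G v).card) (hNa : ∀ v, N0 ≤ a * (nb G v).card)
    (hD : ∀ v, (nb G v).card ≤ D) (hDL : ∀ e ∈ G.edgeSet, (L e).card ≤ 3 * D)
    (hq : 4 * (((D : ℝ) + k * (D * (3 * D)) + 2) * Real.exp (-(δ ^ 2 * N0 / 32))) * ((D : ℝ) + 1) ^ 3 ≤ 1) :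
    ∃ Al' F' γ', ColInv G L χ k (t + 1) a' b' φ' Al' F' γ' := by
  set A : Finset (Sym2 V) := univ.filter fun e => (e ∈ G.edgeSet ∧ χ e = t) with hAdef
  have hmA : ∀ e, e ∈ A ↔ e ∈ G.edgeSet ∧ χ e = t := by intro e; simp [A]
  have hA : ∀ e ∈ A, e ∈ G.edgeSet := fun e he => ((hmA e).1 he).1
  have hAv : ∀ v, A.filter (fun e => v ∈ e) =
      ((nb G v).filter fun x => χ s(v, x) = t).image fun x => s(v, x) := by
    intro v
    rw [hAdef]
    convert filter_at G (fun e => χ e = t) v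
  have hAc : ∀ v, ((A.filter fun e => v ∈ e).card : ℝ) ≤ ρ * (nb G v).card := by
    intro v
    rw [hAv, card_image_of_injective _ (mk_inj v)]
    exact hρ v
  have hdpos : ∀ v x, G.Adj v x → (0:ℝ) < (nb G v).card := by
    intro v x hx
    have : 0 < (nb G v).card := card_pos.2 ⟨x, (mem_nb G v x).2 hx⟩
    exact_mod_cast this
  set Lt := Lst L Al with hLt
  have hne : ∀ e ∈ A, (Lt e).Nonempty := by
    intro e he
    induction e using Sym2.ind with
    | _ v x =>
      have hadj : G.Adj v x := hA _ he
      have h1 := h.lists _ (hA _ he) v (Sym2.mem_mk_left _ _)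
      have h2 := hdpos v x hadj
      have h3 : (0:ℝ) < (Lt s(v, x)).card := lt_of_lt_of_le (mul_pos ha h2) h1
      exact card_pos.1 (by exact_mod_cast h3)
  have hβs : ∀ v c, ∑ e ∈ A.filter (fun e => v ∈ e), pe Lt e c ≤ β := by
    intro v c
    rw [hAv, sum_image (fun x _ y _ h => mk_inj v h)]
    by_cases hd : (nb G v).card = 0
    · rw [card_eq_zero] at hd
      simp [hd, hβ0]
    · have hd' : (0:ℝ) < (nb G v).card := by exact_mod_cast Nat.pos_of_ne_zero hd
      have h1 : ∀ x ∈ (nb G v).filter (fun x => χ s(v, x) = t), pe Lt s(v, x) c ≤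
          if c ∈ Lt s(v, x) then (a * (nb G v).card)⁻¹ else 0 := by
        intro x hx
        unfold pe
        split_ifs with hc
        · apply inv_anti₀ (mul_pos ha hd')
          exact h.lists _ (by simpa [mem_nb] using (mem_filter.1 hx).1) v (Sym2.mem_mk_left _ _)
        · exact le_refl _
      refine (sum_le_sum h1).trans ?_
      rw [← sum_filter, filter_filter, sum_const, nsmul_eq_mul, ← div_eq_mul_inv,
        div_le_iff₀ (mul_pos ha hd')]
      refine (h.cdeg v c t (le_refl _) ht).trans ?_
      rw [← mul_assoc]
      exact mul_le_mul_of_nonneg_right hab hd'.le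
  have hNL : ∀ e ∈ G.edgeSet, N0 ≤ (Lt e).card := by
    intro e he
    induction e using Sym2.ind with
    | _ v x => exact (hNa v).trans (h.lists _ he v (Sym2.mem_mk_left _ _))
  have hDL' : ∀ e ∈ G.edgeSet, (Lt e).card ≤ 3 * D := fun e he =>
    (card_le_card (filter_subset _ _)).trans (hDL e he)
  obtain ⟨col, K, c1, c2, c3, c4⟩ := colour_round G A hA Lt χ k D β δ N0 hβ0 hβ1 hδ hδ1 hne hβs hN hNL
    hD hDL' hq
  set bad := A.filter fun e => ∃ g ∈ A, g ≠ e ∧ (∃ w, w ∈ e ∧ w ∈ g) ∧ col g = col e with hbad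
  have hL' : ∀ e, Lst L (fun v => Al v \ K v) e = (Lt e).filter fun c => ∀ w ∈ e, c ∉ K w := by
    intro e
    simp only [hLt, Lst]
    rw [filter_filter]
    apply filter_congr
    intro c _
    simp only [mem_sdiff]
    constructor
    · intro h; exact ⟨fun v hv => (h v hv).1, fun v hv => (h v hv).2⟩
    · intro h v hv; exact ⟨h.1 v hv, h.2 v hv⟩
  refine ⟨fun v => Al v \ K v, F ∪ bad, fun e => if χ e = t then col e else γ e, ?_⟩
  refine ⟨?_, ?_, ?_, ?_, ?_, ?_⟩
  · intro e he v hv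
    rw [hL']
    refine le_trans ?_ (c2 e he)
    calc a' * (nb G v).card ≤ ((1 - β) ^ 2 - δ) * a * (nb G v).card :=
          mul_le_mul_of_nonneg_right ha' (Nat.cast_nonneg _)
      _ = ((1 - β) ^ 2 - δ) * (a * (nb G v).card) := by ring
      _ ≤ _ := mul_le_mul_of_nonneg_left (h.lists e he v hv) hpos
  · intro v c j htj hjk
    have h1 := c3 v c j hjk
    have h2 := h.cdeg v c j (by omega) hjk
    have hd' : (0:ℝ) ≤ (nb G v).card := Nat.cast_nonneg _
    have h3 : (((nb G v).filter fun x => χ s(v, x) = j ∧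
        c ∈ Lst L (fun v => Al v \ K v) s(v, x)).card : ℝ) ≤
        ((nb G v).filter fun x => χ s(v, x) = j ∧ c ∈ Lt s(v, x) ∧ c ∉ K x).card := by
      have : ((nb G v).filter fun x => χ s(v, x) = j ∧ c ∈ Lst L (fun v => Al v \ K v) s(v, x)) ⊆
          ((nb G v).filter fun x => χ s(v, x) = j ∧ c ∈ Lt s(v, x) ∧ c ∉ K x) := by
        intro x hx
        rw [mem_filter] at hx ⊢
        rw [hL', mem_filter] at hx
        exact ⟨hx.1, hx.2.1, hx.2.2.1, hx.2.2.2 x (Sym2.mem_mk_right _ _)⟩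
      exact_mod_cast card_le_card this
    have h4 : (1 - β) * (((nb G v).filter fun x => χ s(v, x) = j ∧ c ∈ Lt s(v, x)).card : ℝ) ≤
        (1 - β) * (b * (nb G v).card) := mul_le_mul_of_nonneg_left h2 (by linarith)
    have h5 : ((1 - β) * b + δ) * (nb G v).card ≤ b' * (nb G v).card :=
      mul_le_mul_of_nonneg_right hb' hd'
    linarith
  · intro e he hlt hF
    rw [mem_union, not_or] at hF
    try dsimp only
    by_cases hχ : χ e = t
    · rw [if_pos hχ]
      have hc := c1 e ((hmA e).2 ⟨he, hχ⟩)
      refine ⟨(mem_filter.1 hc.1).1, fun v hv hm => ?_⟩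
      exact (mem_sdiff.1 hm).2 (hc.2 v hv)
    · rw [if_neg hχ]
      have hc := h.mem e he (by omega) hF.1
      exact ⟨hc.1, fun v hv hm => hc.2 v hv (mem_sdiff.1 hm).1⟩
  · have key : ∀ e ∈ G.edgeSet, ∀ f ∈ G.edgeSet, χ e = t → χ f < t → f ∉ F →
        (∃ v, v ∈ e ∧ v ∈ f) → col e ≠ γ f := by
      rintro e he f hf h1 h2 hfF ⟨w, hwe, hwf⟩ heq
      have hc := (c1 e ((hmA e).2 ⟨he, h1⟩)).1
      have := (mem_filter.1 hc).2 w hwe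
      rw [heq] at this
      exact (h.mem f hf h2 hfF).2 w hwf this
    intro e he f hf het hft heF hfF hef hsh
    rw [mem_union, not_or] at heF hfF
    try dsimp only
    by_cases h1 : χ e = t <;> by_cases h2 : χ f = t
    · rw [if_pos h1, if_pos h2]
      intro heq
      apply heF.2
      rw [hbad, mem_filter]
      exact ⟨(hmA e).2 ⟨he, h1⟩, f, (hmA f).2 ⟨hf, h2⟩, hef.symm, hsh, heq.symm⟩
    · rw [if_pos h1, if_neg h2]
      exact key e he f hf h1 (by omega) hfF.1 hsh
    · rw [if_neg h1, if_pos h2]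
      obtain ⟨w, hw1, hw2⟩ := hsh
      exact (key f hf e he h2 (by omega) heF.1 ⟨w, hw2, hw1⟩).symm
    · rw [if_neg h1, if_neg h2]
      exact h.proper e he f hf (by omega) (by omega) heF.1 hfF.1 hef hsh
  · intro e he
    rcases mem_union.1 he with he | he
    · exact h.sub e he
    · exact hA e (mem_filter.1 he).1
  · intro v
    have h1 := c4 v
    have h2 := h.fdeg v
    have h3 := hAc v
    have hd' : (0:ℝ) ≤ (nb G v).card := Nat.cast_nonneg _
    have h4 : (((F ∪ bad).filter fun e => v ∈ e).card : ℝ) ≤ (F.filter fun e => v ∈ e).card +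
        (A.filter fun e => v ∈ e ∧ ∃ g ∈ A, g ≠ e ∧ (∃ w, w ∈ e ∧ w ∈ g) ∧ col g = col e).card := by
      have : ((F ∪ bad).filter fun e => v ∈ e) ⊆ (F.filter fun e => v ∈ e) ∪
          (A.filter fun e => v ∈ e ∧ ∃ g ∈ A, g ≠ e ∧ (∃ w, w ∈ e ∧ w ∈ g) ∧ col g = col e) := by
        intro e he
        rw [mem_filter, mem_union, hbad, mem_filter] at he
        rw [mem_union, mem_filter, mem_filter]
        rcases he with ⟨he | ⟨he1, he2⟩, hv⟩
        · exact Or.inl ⟨he, hv⟩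
        · exact Or.inr ⟨he1, hv, he2⟩
      exact_mod_cast (card_le_card this).trans (card_union_le _ _)
    have h5 : 2 * β * ((A.filter fun e => v ∈ e).card : ℝ) ≤ 2 * β * (ρ * (nb G v).card) :=
      mul_le_mul_of_nonneg_left h3 (by linarith)
    have h6 := mul_le_mul_of_nonneg_right hφ' hd'
    linarith

lemma inv_finish [Nonempty C] (G : SimpleGraph V) (L : Sym2 V → Finset C) (χ : Sym2 V → ℕ)
    (k : ℕ) (hχ : ∀ e, χ e < k) {a b φ : ℝ} {Al : V → Finset C} {F : Finset (Sym2 V)}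
    {γ : Sym2 V → C} (h : ColInv G L χ k k a b φ Al F γ) (hφ : 0 ≤ φ) (ha : 2 * φ < a) :
    ∃ γ : Sym2 V → C, (∀ e ∈ G.edgeSet, γ e ∈ L e) ∧
      ∀ e ∈ G.edgeSet, ∀ f ∈ G.edgeSet, e ≠ f → (∃ v, v ∈ e ∧ v ∈ f) → γ e ≠ γ f := by
  obtain ⟨γF, g1, g2⟩ := greedy (fun e f : Sym2 V => ∃ v, v ∈ e ∧ v ∈ f)
    (fun e f ⟨v, h1, h2⟩ => ⟨v, h2, h1⟩) (Classical.arbitrary C) (Lst L Al) F (by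
      intro e he
      have heG := h.sub e he
      induction e using Sym2.ind with
      | _ u v =>
        have hadj : G.Adj u v := heG
        have hsub : (F.filter fun f => ∃ w, w ∈ s(u, v) ∧ w ∈ f) ⊆
            (F.filter fun f => u ∈ f) ∪ (F.filter fun f => v ∈ f) := by
          intro f hf
          rw [mem_filter] at hf
          obtain ⟨hf, w, hw, hwf⟩ := hf
          rw [mem_union, mem_filter, mem_filter]
          rcases Sym2.mem_iff.1 hw with rfl | rfl
          · left; exact ⟨hf, hwf⟩
          · right; exact ⟨hf, hwf⟩
        have h1 : ((F.filter fun f => ∃ w, w ∈ s(u, v) ∧ w ∈ f).card : ℝ) ≤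
            (F.filter fun f => u ∈ f).card + (F.filter fun f => v ∈ f).card := by
          exact_mod_cast (card_le_card hsub).trans (card_union_le _ _)
        have h2 := h.fdeg u
        have h3 := h.fdeg v
        have h4 := h.lists _ heG u (Sym2.mem_mk_left _ _)
        have h5 := h.lists _ heG v (Sym2.mem_mk_right _ _)
        have hu : (0:ℝ) < (nb G u).card := by
          exact_mod_cast card_pos.2 ⟨v, (mem_nb G u v).2 hadj⟩
        have hv : (0:ℝ) < (nb G v).card := by
          exact_mod_cast card_pos.2 ⟨u, (mem_nb G v u).2 hadj.symm⟩
        have h6 := mul_lt_mul_of_pos_right ha hu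
        have h7 := mul_lt_mul_of_pos_right ha hv
        have : ((F.filter fun f => ∃ w, w ∈ s(u, v) ∧ w ∈ f).card : ℝ) < (Lst L Al s(u, v)).card := by
          linarith
        have h8 := Nat.cast_lt.1 this
        convert h8)
  have key : ∀ e ∈ G.edgeSet, ∀ f ∈ G.edgeSet, e ∈ F → f ∉ F → (∃ v, v ∈ e ∧ v ∈ f) → γF e ≠ γ f := by
    rintro e he f hf heF hfF ⟨w, hwe, hwf⟩ heq
    have := (mem_filter.1 (g1 e heF)).2 w hwe
    rw [heq] at this
    exact (h.mem f hf (hχ f) hfF).2 w hwf this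
  refine ⟨fun e => if e ∈ F then γF e else γ e, ?_, ?_⟩
  · intro e he
    try dsimp only
    split_ifs with hF
    · exact (mem_filter.1 (g1 e hF)).1
    · exact (h.mem e he (hχ e) hF).1
  · intro e he f hf hef hsh
    try dsimp only
    by_cases h1 : e ∈ F <;> by_cases h2 : f ∈ F
    · rw [if_pos h1, if_pos h2]; exact g2 e h1 f h2 hef hsh
    · rw [if_pos h1, if_neg h2]; exact key e he f hf h1 h2 hsh
    · rw [if_neg h1, if_pos h2]
      obtain ⟨w, hw1, hw2⟩ := hsh
      exact (key f hf e he h2 h1 ⟨w, hw2, hw1⟩).symm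
    · rw [if_neg h1, if_neg h2]
      exact h.proper e he f hf (hχ e) (hχ f) h1 h2 hef hsh

end Iter


section Core
open scoped Classical
open Finset

/-- Numerical facts for one step of the iteration. -/
lemma numerics {ε s η δ σ k : ℝ} (hε : 0 < ε) (hε1 : ε ≤ 1) (hs : s = ε / (2 + ε))
    (hk : 16 / s ^ 3 ≤ k) (hη : η = ε / (10 * k)) (hδ : δ = s ^ 2 * η / k)
    (hσ : σ = 1 / (k * (1 + ε / 2))) :
    0 < s ∧ s ≤ 1 / 3 ∧ 0 < k ∧ 2 ≤ k * s ∧ 0 < η ∧ k * η = ε / 10 ∧ η ≤ 1 ∧ 0 < δ ∧ δ ≤ 1 / 4 ∧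
    δ ≤ η / k ∧ δ * k = s ^ 2 * η ∧ 0 < σ ∧ 1 - k * σ = s ∧ σ * k * (1 + ε / 2) = 1 ∧ σ ≤ 1 / k ∧
    16 ≤ k * s ^ 3 ∧ 1 ≤ k := by
  have hs0 : 0 < s := by rw [hs]; positivity
  have hs1 : s ≤ 1 / 3 := by
    rw [hs, div_le_iff₀ (by linarith)]; linarith
  have h3 : 0 < s ^ 3 := by positivity
  have h16 : 16 ≤ k * s ^ 3 := by rwa [div_le_iff₀ h3] at hk
  have hk0 : 0 < k := lt_of_lt_of_le (by positivity) hk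
  have hs2 : s ^ 2 ≤ 1 := by nlinarith
  have hks : 2 ≤ k * s := by
    have : k * s ^ 3 ≤ k * s := by
      have : k * s * s ^ 2 ≤ k * s * 1 := mul_le_mul_of_nonneg_left hs2 (by positivity)
      nlinarith
    linarith
  have hk1 : 1 ≤ k := by nlinarith
  have hη0 : 0 < η := by rw [hη]; positivity
  have hkη : k * η = ε / 10 := by rw [hη]; field_simp
  have hη1 : η ≤ 1 := by nlinarith
  have hδ0 : 0 < δ := by rw [hδ]; positivity
  have hδk : δ * k = s ^ 2 * η := by rw [hδ]; field_simp
  have hδη : δ ≤ η / k := by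
    rw [hδ]
    apply div_le_div_of_nonneg_right _ hk0.le
    nlinarith
  have hs9 : s ^ 2 ≤ 1 / 9 := by nlinarith
  have hδ4 : δ ≤ 1 / 4 := by
    have h1 : δ ≤ δ * k := by nlinarith
    have : s ^ 2 * η ≤ 1 / 9 * 1 := mul_le_mul hs9 hη1 hη0.le (by norm_num)
    linarith
  have hσ0 : 0 < σ := by rw [hσ]; positivity
  have hσk : σ * k * (1 + ε / 2) = 1 := by rw [hσ]; field_simp
  have hσs : 1 - k * σ = s := by
    rw [hs, hσ]; field_simp; ring
  have hσ1 : σ ≤ 1 / k := by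
    rw [le_div_iff₀ hk0]
    nlinarith [mul_pos hσ0 hk0]
  exact ⟨hs0, hs1, hk0, hks, hη0, hkη, hη1, hδ0, hδ4, hδη, hδk, hσ0, hσs, hσk, hσ1, h16, hk1⟩

variable {V C : Type} [Fintype V] [Fintype C]

set_option maxHeartbeats 1000000 in
theorem core [Nonempty C] {ε s η δ d0 : ℝ} (k D : ℕ) (hε : 0 < ε) (hε1 : ε ≤ 1)
    (hs : s = ε / (2 + ε)) (hk : 16 / s ^ 3 ≤ k) (hη : η = ε / (10 * k)) (hδ : δ = s ^ 2 * η / k)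
    (G : SimpleGraph V) (L : Sym2 V → Finset C) (hD1 : 1 ≤ D) (hd0 : 0 ≤ d0)
    (hL : ∀ e ∈ G.edgeSet, ∀ v ∈ e, (1 + ε) * (nb G v).card ≤ ((L e).card : ℝ))
    (hN : ∀ v, d0 ≤ (nb G v).card)
    (hD : ∀ v, (nb G v).card ≤ D) (hDL : ∀ e ∈ G.edgeSet, (L e).card ≤ 3 * D)
    (hq : 4 * (((D : ℝ) + k * (D * (3 * D)) + 2) * Real.exp (-(δ ^ 2 * (s ^ 2 * d0) / 32)))
      * ((D : ℝ) + 1) ^ 3 ≤ 1) :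
    ∃ γ : Sym2 V → C, (∀ e ∈ G.edgeSet, γ e ∈ L e) ∧
      ∀ e ∈ G.edgeSet, ∀ f ∈ G.edgeSet, e ≠ f → (∃ v, v ∈ e ∧ v ∈ f) → γ e ≠ γ f := by
  obtain ⟨σ, hσ⟩ : ∃ σ : ℝ, σ = 1 / (k * (1 + ε / 2)) := ⟨_, rfl⟩
  obtain ⟨hs0, hs1, hk0, hks, hη0, hkη, hη1, hδ0, hδ4, hδη, hδk, hσ0, hσs, hσk, hσ1, h16, hk1⟩ :=
    numerics hε hε1 hs hk hη hδ hσ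
  have hkN : 0 < k := by exact_mod_cast hk0
  have hs2 : s ^ 2 ≤ 1 := by nlinarith
  have hN0 : ∀ v, s ^ 2 * d0 ≤ (nb G v).card := fun v => by
    have := hN v
    nlinarith
  have hDR : (1:ℝ) ≤ D := by exact_mod_cast hD1
  obtain ⟨χ, hχk, hχ⟩ := batch_split G k D δ (s ^ 2 * d0) hkN hδ0 (by linarith) hN0 hD (by
    refine le_trans ?_ hq
    set b := Real.exp (-(δ ^ 2 * (s ^ 2 * d0) / 32)) with hb
    have hb0 : 0 < b := Real.exp_pos _
    have h1 : (k:ℝ) ≤ D + k * (D * (3 * D)) + 2 := by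
      have h0 : (1:ℝ) ≤ D * (3 * D) := by clear * - hDR; nlinarith
      have := mul_le_mul_of_nonneg_left h0 hk0.le
      linarith
    have h2 : (D:ℝ) + 1 ≤ (D + 1) ^ 3 := le_self_pow₀ (by linarith) (by norm_num)
    have h3 : (k:ℝ) * b ≤ (D + k * (D * (3 * D)) + 2) * b := mul_le_mul_of_nonneg_right h1 hb0.le
    apply mul_le_mul (by linarith) h2 (by linarith) (by positivity))
  have hχ' : ∀ v, ∀ j < k, (((nb G v).filter fun x => χ s(v, x) = j).card : ℝ) ≤
      ((1 + η) / k) * (nb G v).card := by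
    intro v j hj
    refine (hχ v j hj).trans (mul_le_mul_of_nonneg_right ?_ (Nat.cast_nonneg _))
    rw [add_div]; linarith
  let S : ℕ → ℝ := fun t => 1 - t * σ
  have hSs : ∀ t ≤ k, s ≤ S t := by
    intro t ht
    have : (t:ℝ) ≤ k := by exact_mod_cast ht
    simp only [S]
    nlinarith
  have hS1 : ∀ t, S t ≤ 1 := by
    intro t
    have : (0:ℝ) ≤ t := Nat.cast_nonneg t
    simp only [S]
    nlinarith
  have hSS : ∀ t : ℕ, S (t + 1) = S t - σ := by
    intro t; simp only [S]; push_cast; ring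
  let a : ℕ → ℝ := fun t => (1 + ε) * S t ^ 2 * (1 - t * η)
  let b : ℕ → ℝ := fun t => 1 / k * S t * (1 + (t + 1) * η)
  let φ : ℕ → ℝ := fun t => t * (2 * (1 / (k * s)) * (2 / k) + 2 * δ)
  have hη' : ∀ t ≤ k, (1:ℝ) ≤ (1 + ε) * (1 - t * η) := by
    intro t ht
    have : (t:ℝ) * η ≤ k * η := mul_le_mul_of_nonneg_right (by exact_mod_cast ht) hη0.le
    rw [hkη] at this
    have h2 : (1 + ε) * (1 - ε / 10) ≤ (1 + ε) * (1 - t * η) :=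
      mul_le_mul_of_nonneg_left (by linarith) (by linarith)
    have h3 : ε * ε ≤ ε * 1 := mul_le_mul_of_nonneg_left hε1 hε.le
    linarith
  have has : ∀ t ≤ k, s ^ 2 ≤ a t := by
    intro t ht
    have h1 := hη' t ht
    have h2 := hSs t ht
    have h3 : s ^ 2 ≤ S t ^ 2 := pow_le_pow_left₀ hs0.le h2 2
    have h4 : a t = S t ^ 2 * ((1 + ε) * (1 - t * η)) := by simp only [a]; ring
    rw [h4]
    have h5 := mul_le_mul_of_nonneg_left h1 (sq_nonneg (S t))
    linarith
  have main : ∀ t ≤ k, ∃ Al F γ, ColInv G L χ k t (a t) (b t) (φ t) Al F γ := by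
    intro t
    induction t with
    | zero =>
      intro _
      refine ⟨fun _ => univ, ∅, fun _ => Classical.arbitrary C, ?_, ?_, ?_, ?_, ?_, ?_⟩
      · intro e he v hv
        have : Lst L (fun _ => univ) e = L e := by simp [Lst]
        rw [this]
        have := hL e he v hv
        simpa [a, S] using this
      · intro v c j _ hj
        have h1 := hχ' v j hj
        have h2 : b 0 = (1 + η) / k := by simp only [b, S]; push_cast; ring
        rw [h2]
        refine le_trans ?_ h1
        have : ((nb G v).filter fun x => χ s(v, x) = j ∧ c ∈ Lst L (fun _ => univ) s(v, x)) ⊆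
            ((nb G v).filter fun x => χ s(v, x) = j) := by
          intro x hx
          rw [mem_filter] at hx ⊢
          exact ⟨hx.1, hx.2.1⟩
        exact_mod_cast card_le_card this
      · intro e _ h; exact absurd h (Nat.not_lt_zero _)
      · intro e _ f _ h; exact absurd h (Nat.not_lt_zero _)
      · intro e he; simp at he
      · intro v; simp [φ]
    | succ t ih =>
      intro ht
      obtain ⟨Al, F, γ, hI⟩ := ih (by omega)
      have hSt := hSs t (by omega)
      have hSt1 := hSs (t + 1) ht
      have hStp : 0 < S t := lt_of_lt_of_le hs0 hSt
      have h1t := hS1 t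
      have hat := has t (by omega)
      have hβ : (1:ℝ) - σ / S t = S (t + 1) / S t := by
        rw [hSS]; field_simp
      have hβle : σ / S t ≤ 1 / (k * s) := by
        rw [div_le_div_iff₀ hStp (by positivity)]
        have : σ * k ≤ 1 := by rwa [le_div_iff₀ hk0] at hσ1
        have h8 := mul_le_mul_of_nonneg_right this hs0.le
        linarith
      have hβhalf : 1 / (k * s) ≤ 1 / 2 := one_div_le_one_div_of_le (by norm_num) hks
      have htk : (t:ℝ) + 1 ≤ k := by exact_mod_cast ht
      refine inv_step G L χ k D t (by omega) hI (β := σ / S t) (δ := δ) (ρ := 2 / k)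
        (N0 := s ^ 2 * d0) (lt_of_lt_of_le (by positivity) hat) (by positivity) (by linarith) hδ0
        (by linarith) ?_ ?_ ?_ ?_ ?_ ?_ hN0 ?_ hD hDL hq
      · have e1 : σ / S t * a t = σ * ((1 + ε) * S t * (1 - t * η)) := by
          simp only [a]; field_simp
        have e2 : b t = σ * (S t * (1 + ε / 2) * (1 + (t + 1) * η)) := by
          simp only [b]
          rw [hσ]; field_simp
        rw [e1, e2]
        apply mul_le_mul_of_nonneg_left _ hσ0.le
        have h1 : ((t:ℝ) + 1) * η ≤ ε / 10 := by
          rw [← hkη]; exact mul_le_mul_of_nonneg_right htk hη0.le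
        have h2 : (t:ℝ) * η ≤ ε / 10 := by linarith
        have h3 : (1 + ε / 2) * (1 + (t + 1) * η) ≤ (1 + ε) * (1 - t * η) := by
          have h4 : (1 + ε / 2) * (1 + (t + 1) * η) ≤ (1 + ε / 2) * (1 + ε / 10) :=
            mul_le_mul_of_nonneg_left (by linarith) (by linarith)
          have h5 : (1 + ε) * (1 - ε / 10) ≤ (1 + ε) * (1 - t * η) :=
            mul_le_mul_of_nonneg_left (by linarith) (by linarith)
          have h6 : ε * ε ≤ ε * 1 := mul_le_mul_of_nonneg_left hε1 hε.le
          linarith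
        have h7 := mul_le_mul_of_nonneg_left h3 hStp.le
        linarith
      · have h8 : (1 / 2 : ℝ) ^ 2 ≤ (1 - σ / S t) ^ 2 :=
          pow_le_pow_left₀ (by norm_num) (by linarith) 2
        linarith
      · intro v
        refine (hχ' v t (by omega)).trans (mul_le_mul_of_nonneg_right ?_ (Nat.cast_nonneg _))
        apply div_le_div_of_nonneg_right _ hk0.le
        linarith
      · rw [hβ]
        have e1 : ((S (t + 1) / S t) ^ 2 - δ) * a t =
            (1 + ε) * (1 - t * η) * (S (t + 1) ^ 2 - δ * S t ^ 2) := by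
          simp only [a]; field_simp
        have e2 : a (t + 1) = (1 + ε) * (1 - t * η) * S (t + 1) ^ 2 - (1 + ε) * S (t + 1) ^ 2 * η := by
          simp only [a]; push_cast; ring
        rw [e1, e2]
        have h1 : (1 - t * η) * (δ * S t ^ 2) ≤ S (t + 1) ^ 2 * η := by
          have h2 : (1 - t * η) ≤ 1 := by
            have : (0:ℝ) ≤ t * η := by positivity
            linarith
          have h3 : δ * S t ^ 2 ≤ δ := by
            have := mul_le_mul_of_nonneg_left (pow_le_one₀ (n := 2) hStp.le h1t) hδ0.le
            linarith
          have h4 : δ ≤ s ^ 2 * η := by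
            have := mul_le_mul_of_nonneg_left hk1 hδ0.le
            linarith
          have h5 : s ^ 2 ≤ S (t + 1) ^ 2 := pow_le_pow_left₀ hs0.le hSt1 2
          have h6 : 0 ≤ δ * S t ^ 2 := by positivity
          have h7 := mul_le_mul_of_nonneg_right h2 h6
          have h8 := mul_le_mul_of_nonneg_right h5 hη0.le
          linarith
        have h9 := mul_le_mul_of_nonneg_left h1 (by linarith : 0 ≤ 1 + ε)
        linarith
      · rw [hβ]
        have e1 : S (t + 1) / S t * b t = 1 / k * S (t + 1) * (1 + (t + 1) * η) := by
          simp only [b]; field_simp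
        have e2 : b (t + 1) = 1 / k * S (t + 1) * (1 + (t + 1) * η) + S (t + 1) * (η / k) := by
          simp only [b]; push_cast; ring
        rw [e1, e2]
        have h1 : δ ≤ S (t + 1) * (η / k) := by
          have e3 : δ = s ^ 2 * (η / k) := by rw [hδ]; ring
          rw [e3]
          apply mul_le_mul_of_nonneg_right _ (by positivity)
          refine le_trans ?_ hSt1
          clear * - hs0 hs1
          nlinarith
        linarith
      · have e1 : φ (t + 1) = φ t + (2 * (1 / (k * s)) * (2 / k) + 2 * δ) := by
          simp only [φ]; push_cast; ring
        rw [e1]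
        have : 2 * (σ / S t) * (2 / k) ≤ 2 * (1 / (k * s)) * (2 / k) :=
          mul_le_mul_of_nonneg_right (by linarith) (by positivity)
        linarith
      · intro v
        exact mul_le_mul hat (hN v) hd0 (le_trans (by positivity) hat)
  obtain ⟨Al, F, γ, hI⟩ := main k (le_refl _)
  refine inv_finish G L χ k hχk hI (by simp only [φ]; positivity) ?_
  refine lt_of_lt_of_le ?_ (has k (le_refl _))
  have e1 : 2 * φ k = 8 / (k * s) + 4 * (s ^ 2 * η) := by
    simp only [φ]; rw [← hδk]; field_simp; ring
  rw [e1]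
  have h1 : 8 / (k * s) ≤ s ^ 2 / 2 := by
    rw [div_le_iff₀ (by positivity)]
    have : s ^ 2 / 2 * (k * s) = k * s ^ 3 / 2 := by ring
    linarith
  have h2 : η ≤ 1 / 10 := by
    have := mul_le_mul_of_nonneg_right hk1 hη0.le
    linarith
  have h3 : 0 < s ^ 2 := by positivity
  have h4 := mul_le_mul_of_nonneg_left h2 h3.le
  linarith

end Core


section Wrap

lemma numeric_bound (c : ℝ) (hc : 0 < c) (k : ℕ) : ∃ D0 : ℕ, 1 ≤ D0 ∧ ∀ D : ℕ, D0 ≤ D →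
    4 * (((D : ℝ) + k * (D * (3 * D)) + 2) * Real.exp (-(c * Real.log D ^ 25))) *
      ((D : ℝ) + 1) ^ 3 ≤ 1 := by
  set K : ℝ := 32 * (3 * k + 3) with hK
  have hK0 : 0 < K := by positivity
  obtain ⟨n, hn⟩ := exists_nat_ge (Real.exp (max 1 ((5 + K) / c)))
  refine ⟨max n 1, le_max_right _ _, fun D hD => ?_⟩
  have hDn : n ≤ D := (le_max_left _ _).trans hD
  have hD1' : 1 ≤ D := (le_max_right _ _).trans hD
  have hD1 : (1:ℝ) ≤ D := by exact_mod_cast hD1'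
  have hD0 : (0:ℝ) < D := by linarith
  have hexp : Real.exp (max 1 ((5 + K) / c)) ≤ D := hn.trans (by exact_mod_cast hDn)
  have hl := (Real.le_log_iff_exp_le hD0).2 hexp
  set l := Real.log D with hldef
  have hl1 : 1 ≤ l := (le_max_left _ _).trans hl
  have hl2 : 5 + K ≤ l * c := by
    have := (le_max_right _ _).trans hl
    rwa [div_le_iff₀ hc] at this
  have hDl : (D:ℝ) = Real.exp l := (Real.exp_log hD0).symm
  have h25 : l ^ 2 ≤ l ^ 25 := pow_le_pow_right₀ hl1 (by norm_num)
  have hcl : (5 + K) * l ≤ c * l ^ 25 := by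
    calc (5 + K) * l ≤ (l * c) * l := by gcongr
      _ = c * l ^ 2 := by ring
      _ ≤ _ := by gcongr
  have hb : Real.exp (-(c * l ^ 25)) ≤ Real.exp (-((5 + K) * l)) :=
    Real.exp_le_exp.2 (by linarith)
  have h1 : (D : ℝ) + k * (D * (3 * D)) + 2 ≤ (3 * k + 3) * (D:ℝ) ^ 2 := by
    nlinarith
  have h2 : ((D : ℝ) + 1) ^ 3 ≤ (2 * D) ^ 3 := by gcongr; linarith
  have h5 : (D:ℝ) ^ 5 = Real.exp (5 * l) := by
    rw [hDl, ← Real.exp_nat_mul]; norm_num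
  calc 4 * (((D : ℝ) + k * (D * (3 * D)) + 2) * Real.exp (-(c * l ^ 25))) * ((D : ℝ) + 1) ^ 3
      ≤ 4 * (((3 * k + 3) * (D:ℝ) ^ 2) * Real.exp (-((5 + K) * l))) * (2 * D) ^ 3 := by
        gcongr
    _ = K * ((D:ℝ) ^ 5 * Real.exp (-((5 + K) * l))) := by rw [hK]; ring
    _ = K * Real.exp (-(K * l)) := by
        rw [h5, ← Real.exp_add]; congr 2; ring
    _ ≤ K * Real.exp (-K) := by
        gcongr; nlinarith
    _ ≤ 1 := by
        rw [Real.exp_neg, ← div_eq_mul_inv, div_le_one (Real.exp_pos _)]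
        linarith [Real.add_one_le_exp K]

lemma nb_card {V : Type} [Fintype V] (G : SimpleGraph V) [DecidableRel G.Adj] (v : V) :
    (nb G v).card = G.degree v := by
  rw [← SimpleGraph.card_neighborFinset_eq_degree]
  congr 1
  ext x
  simp [mem_nb]

theorem main_aux : ∀ ε : ℝ, 0 < ε →
    ∃ Δ₀ : ℕ, ∀ (V : Type) [Fintype V] [DecidableEq V]
      (G : SimpleGraph V) [DecidableRel G.Adj] (L : Sym2 V → Finset ℕ),
      Δ₀ ≤ G.maxDegree →
      (Real.log G.maxDegree) ^ (25 : ℕ) ≤ (G.minDegree : ℝ) →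
      (∀ u v : V, G.Adj u v →
        (1 + ε) * max (G.degree u) (G.degree v) ≤ ((L s(u, v)).card : ℝ)) →
      ∃ γ : Sym2 V → ℕ, (∀ e ∈ G.edgeSet, γ e ∈ L e) ∧
  ∀ e ∈ G.edgeSet, ∀ f ∈ G.edgeSet, e ≠ f → (∃ v, v ∈ e ∧ v ∈ f) → γ e ≠ γ f := by
  intro ε₀ hε₀
  obtain ⟨ε, hε, hε1, hεε⟩ : ∃ ε : ℝ, 0 < ε ∧ ε ≤ 1 ∧ ε ≤ ε₀ :=
    ⟨min ε₀ 1, lt_min hε₀ one_pos, min_le_right _ _, min_le_left _ _⟩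
  obtain ⟨s, hs⟩ : ∃ s, s = ε / (2 + ε) := ⟨_, rfl⟩
  obtain ⟨k, hk⟩ := exists_nat_ge (16 / s ^ 3)
  obtain ⟨η, hη⟩ : ∃ η, η = ε / (10 * k) := ⟨_, rfl⟩
  obtain ⟨δ, hδ⟩ : ∃ δ, δ = s ^ 2 * η / k := ⟨_, rfl⟩
  obtain ⟨hs0, -, hk0, -, hη0, -, -, hδ0, -⟩ := numerics hε hε1 hs hk hη hδ rfl
  obtain ⟨D0, hD01, hD0⟩ := numeric_bound (δ ^ 2 * s ^ 2 / 32) (by positivity) k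
  refine ⟨D0, ?_⟩
  intro V _ _ G _ L hΔ hmin hL
  set D := G.maxDegree with hDdef
  have hD1 : 1 ≤ D := hD01.trans hΔ
  have htrim : ∀ e, ∃ T ⊆ L e, T.card = min (L e).card (3 * D) := fun e =>
    Finset.exists_subset_card_eq (min_le_left _ _)
  choose T hTL hTc using htrim
  set S : Finset ℕ := insert 0 (Finset.univ.biUnion T) with hS
  have hTS : ∀ e, T e ⊆ S := fun e =>
    (Finset.subset_biUnion_of_mem T (Finset.mem_univ e)).trans (Finset.subset_insert _ _)
  haveI : Nonempty S := ⟨⟨0, Finset.mem_insert_self _ _⟩⟩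
  have hc : ∀ e, ((T e).subtype (fun x => x ∈ S)).card = (T e).card := fun e => by
    rw [Finset.card_subtype, Finset.filter_true_of_mem (fun x hx => hTS e hx)]
  have key : ∀ u v, G.Adj u v →
      (1 + ε) * (G.degree u : ℝ) ≤ ((T s(u, v)).card : ℝ) := by
    intro u v huv
    have h1 := hL u v huv
    have h2 : (G.degree u : ℝ) ≤ D := by exact_mod_cast G.degree_le_maxDegree u
    have h0 : (0:ℝ) ≤ G.degree u := by positivity
    rw [hTc, Nat.cast_min, le_min_iff]
    constructor
    · refine le_trans ?_ h1
      have h3 : (G.degree u : ℝ) ≤ max (G.degree u : ℝ) (G.degree v : ℝ) := le_max_left _ _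
      push_cast
      gcongr
    · push_cast
      nlinarith
  obtain ⟨γ, hγ1, hγ2⟩ := core (C := S) (d0 := (G.minDegree : ℝ)) k D hε hε1 hs hk hη hδ G
    (fun e => (T e).subtype (fun x => x ∈ S)) hD1 (by positivity)
    (by
      intro e he w hw
      rw [hc, nb_card]
      obtain ⟨x, rfl⟩ := Sym2.mem_iff_exists.1 hw
      exact key w x he)
    (by
      intro v
      rw [nb_card]
      exact_mod_cast G.minDegree_le_degree v)
    (by
      intro v
      rw [nb_card]
      exact G.degree_le_maxDegree v)
    (by
      intro e _
      rw [hc, hTc]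
      exact min_le_right _ _)
    (by
      refine le_trans ?_ (hD0 D hΔ)
      have : Real.exp (-(δ ^ 2 * (s ^ 2 * (G.minDegree : ℝ)) / 32)) ≤
          Real.exp (-(δ ^ 2 * s ^ 2 / 32 * Real.log D ^ 25)) := by
        apply Real.exp_le_exp.2
        have h : δ ^ 2 * s ^ 2 / 32 * Real.log D ^ 25 ≤
            δ ^ 2 * s ^ 2 / 32 * (G.minDegree : ℝ) := by gcongr
        linarith
      gcongr)
  refine ⟨fun e => (γ e : ℕ), fun e he => hTL e ?_, fun e he f hf hef hsh h =>
    hγ2 e he f hf hef hsh (Subtype.ext h)⟩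
  have := hγ1 e he
  simpa using this

end Wrap


theorem stmt_0 :
    ∀ ε : ℝ, 0 < ε →
    ∃ Δ₀ : ℕ, ∀ (V : Type) [Fintype V] [DecidableEq V]
      (G : SimpleGraph V) [DecidableRel G.Adj] (L : Sym2 V → Finset ℕ),
      Δ₀ ≤ G.maxDegree →
      (Real.log G.maxDegree) ^ (25 : ℕ) ≤ (G.minDegree : ℝ) →
      (∀ u v : V, G.Adj u v →
        (1 + ε) * max (G.degree u) (G.degree v) ≤ ((L s(u, v)).card : ℝ)) →
      ∃ γ : Sym2 V → ℕ, IsLEdgeColouring G L γ := by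
  exact main_aux
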